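/- For all positive integers n, k, D, b there is a constant C = C(n,k,D,b) with the following property: if T is a finite set of hypersurfaces of ℝ^n each of degree at most D, and S is a finite set of points of ℝ^n that is (k,b)-free with respect to T, then ℐ(S,T) ≤ C·(|S|^{α_k(n)}·|T|^{β_k(n)} + |T| + |S|). -/

import Mathlib

open MvPolynomial Set

noncomputable section

namespace Paper

variable (n : ℕ)

/-- The zero locus in `ℂⁿ` of a set of polynomials. -/
def zeroLocus (I : Set (MvPolynomial (Fin n) ℂ)) : Set (Fin n → ℂ) :=
  {x | ∀ f ∈ I, eval x f = 0}

/-- A subset of `ℂⁿ` is algebraic if it is the zero locus of a set of polynomials. -/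
def IsAlgebraicSet (V : Set (Fin n → ℂ)) : Prop :=
  ∃ I : Set (MvPolynomial (Fin n) ℂ), V = zeroLocus n I

/-- An irreducible (affine) variety in `ℂⁿ`: a nonempty algebraic set that is not covered
by two algebraic sets unless it is contained in one of them. -/
def IsIrredVariety (V : Set (Fin n → ℂ)) : Prop :=
  IsAlgebraicSet n V ∧ V.Nonempty ∧
    ∀ V₁ V₂ : Set (Fin n → ℂ), IsAlgebraicSet n V₁ → IsAlgebraicSet n V₂ →
      V ⊆ V₁ ∪ V₂ → V ⊆ V₁ ∨ V ⊆ V₂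

/-- There is a strictly increasing chain of `d + 1` irreducible varieties inside `V`. -/
def HasChain (V : Set (Fin n → ℂ)) (d : ℕ) : Prop :=
  ∃ W : Fin (d + 1) → Set (Fin n → ℂ),
    (∀ i, IsIrredVariety n (W i)) ∧ (∀ i j : Fin (d + 1), i < j → W i ⊂ W j) ∧
      W (Fin.last d) ⊆ V

/-- The (Krull) dimension of a subset of `ℂⁿ`, as the length of the longest chain of
irreducible subvarieties. -/
def dim (V : Set (Fin n → ℂ)) : ℕ := sSup {d | HasChain n V d}

/-- `W` is an irreducible component of `X`: an irreducible subvariety that is maximal among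
irreducible subvarieties of `X`. -/
def IsIrredComponent (W X : Set (Fin n → ℂ)) : Prop :=
  IsIrredVariety n W ∧ W ⊆ X ∧
    ∀ W', IsIrredVariety n W' → W ⊆ W' → W' ⊆ X → W' = W

/-- The degree of an irreducible variety `V ⊆ ℂⁿ` of dimension `d` (i.e. the degree of its
projective closure): the largest finite number of points in which an affine-linear subspace of
dimension `n - d` meets `V`. -/
def degree (V : Set (Fin n → ℂ)) : ℕ :=
  sSup { m | ∃ L : AffineSubspace ℂ (Fin n → ℂ),
    Module.finrank ℂ L.direction = n - dim n V ∧ (V ∩ ↑L).Finite ∧ (V ∩ ↑L).ncard = m }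

/-- The degree of an algebraic set: the sum of the degrees of its irreducible components. -/
def degreeSum (X : Set (Fin n → ℂ)) : ℕ :=
  ∑ᶠ W ∈ {W | IsIrredComponent n W X}, degree n W

/-- The maximal dimension of an irreducible component of `X` containing `V` equals `e`. -/
def MaxCompDimEq (X V : Set (Fin n → ℂ)) (e : ℕ) : Prop :=
  (∃ W, IsIrredComponent n W X ∧ V ⊆ W ∧ dim n W = e) ∧
    ∀ W, IsIrredComponent n W X → V ⊆ W → dim n W ≤ e

/-- The partial degrees `δ_i(V)` of an irreducible variety `V`:  the minimal `δ` such that there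
are polynomials of degree at most `δ` cutting out an algebraic set containing `V` whose
irreducible components containing `V` have maximal dimension `n - i`.  By convention
`δ_0(V) = 0`. -/
def partialDeg (V : Set (Fin n → ℂ)) (i : ℕ) : ℕ :=
  if i = 0 then 0
  else sInf { δ | ∃ I : Finset (MvPolynomial (Fin n) ℂ),
    (∀ f ∈ I, f.totalDegree ≤ δ) ∧ V ⊆ zeroLocus n ↑I ∧
      MaxCompDimEq n (zeroLocus n ↑I) V (n - i) }

/-- The partial degrees as extended naturals, with the convention `δ_i(V) = ∞` for
`i > n - dim V`. -/
def partialDegE (V : Set (Fin n → ℂ)) (i : ℕ) : ℕ∞ :=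
  if i ≤ n - dim n V then (partialDeg n V i : ℕ∞) else ⊤

/-- `δ(V)` for an irreducible variety `V`: the minimal `δ` such that `V` is an irreducible
component of the zero set of a finite family of polynomials of degree at most `δ`. -/
def deltaIrr (V : Set (Fin n → ℂ)) : ℕ :=
  sInf { δ | ∃ I : Finset (MvPolynomial (Fin n) ℂ),
    (∀ f ∈ I, f.totalDegree ≤ δ) ∧ IsIrredComponent n V (zeroLocus n ↑I) }

/-- `δ(V)` for a general algebraic set `V`: the minimal `δ` such that every irreducible
component of `V` is an irreducible component of the zero set of a finite family of polynomials
of degree at most `δ`. -/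
def deltaSet (V : Set (Fin n → ℂ)) : ℕ :=
  sInf { δ | ∃ I : Finset (MvPolynomial (Fin n) ℂ),
    (∀ f ∈ I, f.totalDegree ≤ δ) ∧
      ∀ W, IsIrredComponent n W V → IsIrredComponent n W (zeroLocus n ↑I) }

/-- An algebraic set all of whose irreducible components have dimension `d`. -/
def IsAlgSetOfDim (V : Set (Fin n → ℂ)) (d : ℕ) : Prop :=
  IsAlgebraicSet n V ∧ V.Nonempty ∧ ∀ W, IsIrredComponent n W V → dim n W = d

/-- `Δ_i(V) = max (deg V / (δ_{i+1}(V) ⋯ δ_{n-d}(V))) 1`. -/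
def Delta (V : Set (Fin n → ℂ)) (i : ℕ) : ℝ :=
  max ((degree n V : ℝ) / ∏ j ∈ Finset.Icc (i + 1) (n - dim n V), (partialDeg n V j : ℝ)) 1

/-- `i` is admissible with respect to `V` if `δ_{i+1}(V) > 2 i δ_i(V)` (with the convention
`δ_i(V) = ∞` for `i > n - dim V`). -/
def Admissible (V : Set (Fin n → ℂ)) (i : ℕ) : Prop :=
  ((2 * i : ℕ) : ℕ∞) * partialDegE n V i < partialDegE n V (i + 1)

/-- The interval `ℛ_i(V) = [c₁ δ_i(V)^{n-i} Δ_i(V), (c₀/2) δ_{i+1}(V)^{n-i} Δ_i(V)]`,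
where `δ_{n-d+1}(V) = ∞` makes the last interval a half-line. -/
def RSet (c0 c1 : ℝ) (V : Set (Fin n → ℂ)) (i : ℕ) : Set ℝ :=
  if i = n - dim n V then
    Set.Ici (c1 * (partialDeg n V i : ℝ) ^ (n - i) * Delta n V i)
  else
    Set.Icc (c1 * (partialDeg n V i : ℝ) ^ (n - i) * Delta n V i)
      ((c0 / 2) * (partialDeg n V (i + 1) : ℝ) ^ (n - i) * Delta n V i)

/-- The interval `ℛ^l_{s,τ}(V) = [τ δ_s(V)^{n-(s+l)} Δ_s(V), τ δ_{s+1}(V)^{n-(s+l)} Δ_s(V)]`,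
where `δ_{n-d+1}(V) = ∞` makes the last interval a half-line. -/
def RlSet (τ : ℝ) (l : ℕ) (V : Set (Fin n → ℂ)) (s : ℕ) : Set ℝ :=
  if s = n - dim n V then
    Set.Ici (τ * (partialDeg n V s : ℝ) ^ (n - (s + l)) * Delta n V s)
  else
    Set.Icc (τ * (partialDeg n V s : ℝ) ^ (n - (s + l)) * Delta n V s)
      (τ * (partialDeg n V (s + 1) : ℝ) ^ (n - (s + l)) * Delta n V s)

/-- The ideal `I(V)` of polynomials vanishing on `V ⊆ ℂⁿ`. -/
def vanishingIdeal (V : Set (Fin n → ℂ)) : Ideal (MvPolynomial (Fin n) ℂ) where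
  carrier := {f | ∀ x ∈ V, eval x f = 0}
  add_mem' := by
    intro a b ha hb x hx
    simp [ha x hx, hb x hx]
  zero_mem' := by
    intro x hx
    simp
  smul_mem' := by
    intro c f hf x hx
    simp [smul_eq_mul, hf x hx]

/-- The ideal `I_ℝ(V)` of real polynomials vanishing on `V ⊆ ℂⁿ`. -/
def vanishingIdealR (V : Set (Fin n → ℂ)) : Ideal (MvPolynomial (Fin n) ℝ) :=
  (vanishingIdeal n V).comap (MvPolynomial.map (algebraMap ℝ ℂ))

/-- The affine Hilbert function `H_{I(V)}(m) = dim_ℂ ℂ[x]_{≤ m} / I(V)_{≤ m}`, realised as the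
dimension of the image of the space of polynomials of total degree at most `m` in the quotient
ring `ℂ[x]/I(V)`. -/
def hilbert (V : Set (Fin n → ℂ)) (m : ℕ) : ℕ :=
  Module.finrank ℂ
    (Submodule.map (Ideal.Quotient.mkₐ ℂ (vanishingIdeal n V)).toLinearMap
      (restrictTotalDegree (Fin n) ℂ m))

/-- The real affine Hilbert function `H_{I(V),ℝ}(m) = dim_ℝ ℝ[x]_{≤ m} / I_ℝ(V)_{≤ m}`. -/
def hilbertR (V : Set (Fin n → ℂ)) (m : ℕ) : ℕ :=
  Module.finrank ℝ
    (Submodule.map (Ideal.Quotient.mkₐ ℝ (vanishingIdealR n V)).toLinearMap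
      (restrictTotalDegree (Fin n) ℝ m))

/-- The inclusion `ℝⁿ → ℂⁿ`. -/
def toC (x : Fin n → ℝ) : Fin n → ℂ := fun i => (x i : ℂ)

/-- The set of real points of `V ⊆ ℂⁿ`. -/
def realPts (V : Set (Fin n → ℂ)) : Set (Fin n → ℝ) := {x | toC n x ∈ V}

/-- The real zero set of a real polynomial. -/
def zeroSetR (g : MvPolynomial (Fin n) ℝ) : Set (Fin n → ℝ) := {x | eval x g = 0}

/-- The zero locus of the polynomials `P 1, …, P i` (the first `i` members of a tuple of
polynomials indexed from `1`). -/
def zeroLocusUpTo (P : ℕ → MvPolynomial (Fin n) ℂ) (i : ℕ) : Set (Fin n → ℂ) :=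
  zeroLocus n {f | ∃ j : ℕ, 1 ≤ j ∧ j ≤ i ∧ f = P j}

/-- `V'` is an `(n-s)`-minimal variety of the irreducible variety `V`. -/
def IsMinimalVariety (V V' : Set (Fin n → ℂ)) (s : ℕ) : Prop :=
  IsIrredVariety n V' ∧ V ⊆ V' ∧ dim n V' = n - s ∧
    ∀ f ∈ vanishingIdeal n V, f ∉ vanishingIdeal n V' →
      partialDegE n V (s + 1) ≤ (f.totalDegree : ℕ∞)

/-- `S` is `(k,b)`-free with respect to `T`, for the incidence relation `R`. -/
def KBFree {α β : Type*} (R : α → β → Prop) (S : Finset α) (T : Finset β) (k b : ℕ) : Prop :=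
  ¬ ∃ (P : Finset α) (B : Finset β), P ⊆ S ∧ B ⊆ T ∧ P.card = k ∧ B.card = b ∧
      ∀ s ∈ P, ∀ t ∈ B, R s t

/-- The number of incidences between a finite set of points and a finite family of sets. -/
def incCountAbs {α : Type*} (S : Finset α) (T : Finset (Set α)) : ℕ :=
  ∑ t ∈ T, (↑S ∩ t).ncard

/-- The number of incidences between a finite set of real points and a finite family of
subsets of `ℂⁿ`. -/
def incCount (S : Finset (Fin n → ℝ)) (T : Finset (Set (Fin n → ℂ))) : ℕ :=
  ∑ t ∈ T, (↑S ∩ toC n ⁻¹' t).ncard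

/-- The total degree `deg T = ∑_{t ∈ T} deg t` of a finite family of algebraic sets. -/
def degFamily (T : Finset (Set (Fin n → ℂ))) : ℕ := ∑ t ∈ T, degreeSum n t

/-- The total degree of a finite family of irreducible varieties. -/
def degFamilyIrred (T : Finset (Set (Fin n → ℂ))) : ℕ := ∑ t ∈ T, degree n t

/-- `α_k(d)`. -/
def alpha (k d : ℕ) : ℝ :=
  if k = 1 ∧ d = 1 then 0 else (k : ℝ) * ((d : ℝ) - 1) / ((d : ℝ) * (k : ℝ) - 1)

/-- `β_k(d)`. -/
def beta (k d : ℕ) : ℝ :=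
  if k = 1 ∧ d = 1 then 1 else (d : ℝ) * ((k : ℝ) - 1) / ((d : ℝ) * (k : ℝ) - 1)

/-- `τ_d(b,k) = b^{1-β_k(d)} k^{1-α_k(d)}`. -/
def tauC (d b k : ℕ) : ℝ := (b : ℝ) ^ (1 - beta k d) * (k : ℝ) ^ (1 - alpha k d)

/-- The Chardin–Philippon property of the constant `c₀`: for every pure-dimensional algebraic
set `W ⊆ ℂⁿ` and every `m ≥ 2 (n - dim W) δ(W)` one has `H_{I(W)}(m) ≥ c₀ m^{dim W} deg W`. -/
def ChardinPhilippon (c0 : ℝ) : Prop :=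
  ∀ (W : Set (Fin n → ℂ)) (e : ℕ), IsAlgSetOfDim n W e →
    ∀ m : ℕ, 2 * (n - e) * deltaSet n W ≤ m →
      c0 * (m : ℝ) ^ e * (degreeSum n W : ℝ) ≤ (hilbert n W m : ℝ)

/-- The defining property of the constant `c₁`: for every irreducible variety `V`, every
positive integer lies in some interval `ℛ_i(V)` with `i` admissible with respect to `V`. -/
def CoversPositiveIntegers (c0 c1 : ℝ) : Prop :=
  ∀ V : Set (Fin n → ℂ), IsIrredVariety n V →
    ∀ m : ℕ, 0 < m → ∃ i, Admissible n V i ∧ (m : ℝ) ∈ RSet n c0 c1 V i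

/-- `i_V(M)`: the smallest admissible `i` such that `M^{n-i} Δ_i(V) ∈ ℛ_i(V)`. -/
def iV (c0 c1 : ℝ) (V : Set (Fin n → ℂ)) (M : ℕ) : ℕ :=
  sInf {i | Admissible n V i ∧ (M : ℝ) ^ (n - i) * Delta n V i ∈ RSet n c0 c1 V i}

/-- A real polynomial bisects a finite set `S ⊆ ℝⁿ` if it is positive on at most half of `S`
and negative on at most half of `S`. -/
def Bisects (g : MvPolynomial (Fin n) ℝ) (S : Finset (Fin n → ℝ)) : Prop :=
  ((↑S ∩ {x | 0 < eval x g}).ncard : ℝ) ≤ (S.card : ℝ) / 2 ∧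
    ((↑S ∩ {x | eval x g < 0}).ncard : ℝ) ≤ (S.card : ℝ) / 2

/-- The set of `r`-rich points of a family `T`: points lying in at least `r` members of `T`. -/
def richPts (T : Finset (Set (Fin n → ℂ))) (r : ℕ) : Set (Fin n → ℂ) :=
  {x | r ≤ ({t | t ∈ T ∧ x ∈ t} : Set (Set (Fin n → ℂ))).ncard}

/-- A real hypersurface of degree at most `D`: the real zero set of a nonzero real polynomial
of degree at most `D`. -/
def IsRealHypersurfaceDegLE (t : Set (Fin n → ℝ)) (D : ℕ) : Prop :=
  ∃ p : MvPolynomial (Fin n) ℝ, p ≠ 0 ∧ t = zeroSetR n p ∧ p.totalDegree ≤ D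

/-- Lexicographic comparison of the tuples `(f 1, …, f m)` and `(g 1, …, g m)`. -/
def LexLE (m : ℕ) (f g : ℕ → ℕ) : Prop :=
  (∀ j ∈ Finset.Icc 1 m, f j = g j) ∨
    ∃ i ∈ Finset.Icc 1 m, (∀ j, 1 ≤ j → j < i → f j = g j) ∧ f i < g i


/-- exponents bounded by `N` -/
def expEquiv (n N : ℕ) : {s : Fin n →₀ ℕ | ∀ i, s i ≤ N} ≃ (Fin n → Fin (N+1)) where
  toFun s := fun i => ⟨s.1 i, Nat.lt_succ_of_le (s.2 i)⟩
  invFun v := ⟨Finsupp.equivFunOnFinite.symm (fun i => (v i : ℕ)), fun i => by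
    simpa using Nat.lt_succ_iff.mp (v i).2⟩
  left_inv s := by
    apply Subtype.ext; ext i; simp
  right_inv v := by
    ext i; simp

lemma finite_restrictDegree (n N : ℕ) : Module.Finite ℝ (restrictDegree (Fin n) ℝ N) := by
  have : Finite {s : Fin n →₀ ℕ | ∀ i, s i ≤ N} := Finite.of_equiv _ (expEquiv n N).symm
  exact Module.Finite.of_basis (basisRestrictSupport ℝ {s : Fin n →₀ ℕ | ∀ i, s i ≤ N})

lemma finrank_restrictDegree (n N : ℕ) :
    Module.finrank ℝ (restrictDegree (Fin n) ℝ N) = (N+1)^n := by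
  rw [restrictDegree, Module.finrank_eq_nat_card_basis (basisRestrictSupport ℝ {s : Fin n →₀ ℕ | ∀ i, s i ≤ N}),
    Nat.card_congr (expEquiv n N)]
  simp

/-- Restriction of a polynomial to the line `z + s v`. -/
def lineHom {n : ℕ} (z v : Fin n → ℝ) : MvPolynomial (Fin n) ℝ →ₐ[ℝ] Polynomial ℝ :=
  aeval (fun i => Polynomial.C (z i) + Polynomial.C (v i) * Polynomial.X)

lemma lineHom_eval {n : ℕ} (z v : Fin n → ℝ) (p : MvPolynomial (Fin n) ℝ) (s : ℝ) :
    (lineHom z v p).eval s = eval (fun i => z i + v i * s) p := by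
  induction p using MvPolynomial.induction_on with
  | C a => simp [lineHom]
  | add p q hp hq => simp [hp, hq]
  | mul_X p i hp => simp only [map_mul, Polynomial.eval_mul, hp]; simp [lineHom]

lemma lineHom_deriv {n : ℕ} (z v : Fin n → ℝ) (p : MvPolynomial (Fin n) ℝ) (s : ℝ) :
    (Polynomial.derivative (lineHom z v p)).eval s
      = ∑ j, eval (fun i => z i + v i * s) (pderiv j p) * v j := by
  induction p using MvPolynomial.induction_on with
  | C a => simp [lineHom]
  | add p q hp hq => simp [hp, hq, add_mul, Finset.sum_add_distrib]
  | mul_X p i hp =>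
    have h1 : lineHom z v (X i) = Polynomial.C (z i) + Polynomial.C (v i) * Polynomial.X := by
      simp [lineHom]
    simp only [map_mul, h1, Polynomial.derivative_mul, Polynomial.eval_add, Polynomial.eval_mul, hp,
      Derivation.leibniz, smul_eq_mul, pderiv_X, lineHom_eval, map_add, add_mul,
      Finset.sum_add_distrib]
    simp only [Polynomial.derivative_C, Polynomial.derivative_X, Polynomial.eval_C, Polynomial.eval_X,
      eval_X, Polynomial.eval_zero, Polynomial.eval_one, Pi.single_apply, Finset.sum_mul]
    rw [add_comm]
    congr 1
    · rw [Finset.sum_eq_single i]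
      · simp
      · intro b _ hb; simp [hb.symm]
      · simp
    · apply Finset.sum_congr rfl; intro j _; ring

lemma exists_lagrange {n : ℕ} (Z : Finset (Fin n → ℝ)) (z : Fin n → ℝ) :
    ∃ q : MvPolynomial (Fin n) ℝ, eval z q = 1 ∧ ∀ z' ∈ Z, z' ≠ z → eval z' q = 0 := by
  classical
  have h : ∀ z' : Fin n → ℝ, ∃ q : MvPolynomial (Fin n) ℝ, eval z q = 1 ∧ (z' ≠ z → eval z' q = 0) := by
    intro z'
    by_cases hz : z' = z
    · exact ⟨1, by simp, fun h => absurd hz h⟩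
    · obtain ⟨i, hi⟩ := Function.ne_iff.mp hz
      refine ⟨C (z i - z' i)⁻¹ * (X i - C (z' i)), ?_, fun _ => by simp⟩
      simp only [map_mul, eval_C, map_sub, eval_X]
      exact inv_mul_cancel₀ (sub_ne_zero.mpr (Ne.symm hi))
  choose q h1 h2 using h
  refine ⟨∏ z' ∈ Z, q z', by simp [map_prod, h1], fun z' hz' hne => ?_⟩
  rw [map_prod]
  exact Finset.prod_eq_zero hz' (h2 z' hne)

/-- key linear independence -/
lemma nondeg_linInd {n : ℕ} (f : Fin n → MvPolynomial (Fin n) ℝ) (Z : Finset (Fin n → ℝ))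
    (hf : ∀ z ∈ Z, ∀ i, eval z (f i) = 0)
    (hdet : ∀ z ∈ Z, (Matrix.of fun i j => eval z (pderiv j (f i))).det ≠ 0)
    (q : (Fin n → ℝ) → MvPolynomial (Fin n) ℝ)
    (hq1 : ∀ z, eval z (q z) = 1) (hq2 : ∀ z, ∀ z' ∈ Z, z' ≠ z → eval z' (q z) = 0) (B : ℕ) :
    LinearIndependent ℝ (fun x : Z × (Fin n → Fin B) => q x.1 * ∏ i, f i ^ (x.2 i : ℕ)) := by
  classical
  rw [Fintype.linearIndependent_iff]
  intro c hc
  have key : ∀ j : ℕ, ∀ z : Z, ∀ β : Fin n → Fin B, ∑ i, (β i : ℕ) = j → c (z, β) = 0 := by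
    intro j
    induction j using Nat.strong_induction_on with
    | _ j ih =>
    intro z
    set P : MvPolynomial (Fin n) ℝ := ∑ β : Fin n → Fin B, if ∑ i, (β i : ℕ) = j then
        monomial (Finsupp.equivFunOnFinite.symm (fun i => (β i : ℕ))) (c (z, β)) else 0 with hP
    have hPeval : ∀ y : Fin n → ℝ, eval y P = ∑ β : Fin n → Fin B, if ∑ i, (β i : ℕ) = j then
        c (z, β) * ∏ i, y i ^ (β i : ℕ) else 0 := by
      intro y
      rw [hP, map_sum]
      apply Finset.sum_congr rfl; intro β _
      split_ifs
      · rw [eval_monomial, Finsupp.prod_fintype _ _ (by simp)]; simp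
      · simp
    have hP0 : P = 0 := by
      apply MvPolynomial.funext
      intro y
      rw [hPeval, map_zero]
      set A : Matrix (Fin n) (Fin n) ℝ := Matrix.of fun i j => eval z.1 (pderiv j (f i)) with hA
      have hAu : IsUnit A.det := (hdet z z.2).isUnit
      set v := A⁻¹.mulVec y with hv
      have hAv : A.mulVec v = y := by
        rw [hv, Matrix.mulVec_mulVec, Matrix.mul_nonsing_inv _ hAu, Matrix.one_mulVec]
      have hz0 : (fun i => z.1 i + v i * 0) = z.1 := by ext; simp
      have hh : ∀ i, ∃ h : Polynomial ℝ, lineHom z.1 v (f i) = Polynomial.X * h ∧ h.coeff 0 = y i := by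
        intro i
        have h0 : (lineHom z.1 v (f i)).eval 0 = 0 := by
          rw [lineHom_eval, hz0]; exact hf z z.2 i
        have : Polynomial.X ∣ lineHom z.1 v (f i) := by
          rw [Polynomial.X_dvd_iff, Polynomial.coeff_zero_eq_eval_zero, h0]
        obtain ⟨h, hh⟩ := this
        refine ⟨h, hh, ?_⟩
        have h1 := lineHom_deriv z.1 v (f i) 0
        rw [hz0, hh] at h1
        simp only [Polynomial.derivative_mul, Polynomial.derivative_X, Polynomial.eval_add,
          Polynomial.eval_mul, Polynomial.eval_X, zero_mul, add_zero, one_mul] at h1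
        rw [Polynomial.coeff_zero_eq_eval_zero, h1, ← hAv]
        rfl
      choose h hh1 hh2 using hh
      have h3 := congrArg (fun p => (lineHom z.1 v p).coeff j) hc
      simp only [map_sum, map_zero, Polynomial.coeff_zero, Polynomial.finsetSum_coeff, map_smul,
        Polynomial.coeff_smul, map_mul, map_prod, map_pow, hh1, mul_pow, Finset.prod_mul_distrib,
        Finset.prod_pow_eq_pow_sum] at h3
      rw [Fintype.sum_prod_type, Finset.sum_eq_single z] at h3
      · refine Eq.trans ?_ h3
        apply Finset.sum_congr rfl; intro β _
        have e1 : lineHom z.1 v (q z.1) * (Polynomial.X ^ (∑ i, (β i : ℕ)) * ∏ i, h i ^ (β i : ℕ))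
           = Polynomial.X ^ (∑ i, (β i : ℕ)) * (lineHom z.1 v (q z.1) * ∏ i, h i ^ (β i : ℕ)) := by ring
        rw [e1, Polynomial.coeff_X_pow_mul']
        split_ifs with g1 g2 g2
        · rw [g1, Nat.sub_self, Polynomial.coeff_zero_eq_eval_zero, Polynomial.eval_mul, lineHom_eval, hz0,
            hq1, one_mul, Polynomial.eval_prod, smul_eq_mul]
          congr 1
          apply Finset.prod_congr rfl; intro i _
          rw [Polynomial.eval_pow, ← Polynomial.coeff_zero_eq_eval_zero, hh2]
        · omega
        · rw [ih _ (lt_of_le_of_ne g2 g1) z β rfl]; simp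
        · simp
      · intro z' _ hne
        apply Finset.sum_eq_zero; intro β _
        have e1 : lineHom z.1 v (q z'.1) * (Polynomial.X ^ (∑ i, (β i : ℕ)) * ∏ i, h i ^ (β i : ℕ))
           = Polynomial.X ^ (∑ i, (β i : ℕ)) * (lineHom z.1 v (q z'.1) * ∏ i, h i ^ (β i : ℕ)) := by ring
        rw [e1, Polynomial.coeff_X_pow_mul']
        split_ifs with g1
        · rcases g1.lt_or_eq with g | g
          · rw [ih _ g z' β rfl]; simp
          · rw [g, Nat.sub_self, Polynomial.coeff_zero_eq_eval_zero, Polynomial.eval_mul, lineHom_eval, hz0,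
              hq2 z'.1 z.1 z.2 (fun hzz => hne (Subtype.ext hzz.symm))]; simp
        · simp
      · simp
    intro β hβ
    have h5 := congrArg (coeff (Finsupp.equivFunOnFinite.symm (fun i => (β i : ℕ)))) hP0
    rw [hP, coeff_sum, coeff_zero, Finset.sum_eq_single β] at h5
    · rw [if_pos hβ, coeff_monomial, if_pos rfl] at h5; exact h5
    · intro γ _ hne
      split_ifs
      · rw [coeff_monomial, if_neg]
        intro he
        apply hne
        have := Finsupp.equivFunOnFinite.symm.injective he
        ext i; exact congrFun this i
      · simp
    · simp
  rintro ⟨z, β⟩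
  exact key _ z β rfl

lemma card_nondeg_zeros_le {n e : ℕ} (f : Fin n → MvPolynomial (Fin n) ℝ) (Z : Finset (Fin n → ℝ))
    (he : ∀ i, (f i).totalDegree ≤ e)
    (hf : ∀ z ∈ Z, ∀ i, eval z (f i) = 0)
    (hdet : ∀ z ∈ Z, (Matrix.of fun i j => eval z (pderiv j (f i))).det ≠ 0) :
    Z.card ≤ (n * e + 1) ^ n := by
  classical
  choose q hq1 hq2 using fun z => exists_lagrange Z z
  set K := Z.sup (fun z => (q z).totalDegree)
  set B := K + 1
  have hli := nondeg_linInd f Z hf hdet q hq1 hq2 B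
  set N := K + n * (e * B)
  have hmem : ∀ x : Z × (Fin n → Fin B), q x.1 * ∏ i, f i ^ (x.2 i : ℕ) ∈ restrictDegree (Fin n) ℝ N := by
    intro x
    apply restrictTotalDegree_le_restrictDegree
    rw [mem_restrictTotalDegree]
    refine (totalDegree_mul _ _).trans (add_le_add (Finset.le_sup (f := fun z => (q z).totalDegree) x.1.2) ?_)
    refine (totalDegree_finsetProd _ _).trans ?_
    calc _ ≤ ∑ i : Fin n, e * B := Finset.sum_le_sum (fun i _ => by
            refine (totalDegree_pow _ _).trans ?_
            rw [mul_comm]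
            exact Nat.mul_le_mul (he i) (x.2 i).2.le)
      _ = _ := by simp
  have hli2 : LinearIndependent ℝ (fun x : Z × (Fin n → Fin B) =>
      (⟨q x.1 * ∏ i, f i ^ (x.2 i : ℕ), hmem x⟩ : restrictDegree (Fin n) ℝ N)) := by
    apply LinearIndependent.of_comp (restrictDegree (Fin n) ℝ N).subtype
    exact hli
  have := finite_restrictDegree n N
  have h1 := hli2.fintype_card_le_finrank
  rw [finrank_restrictDegree] at h1
  simp only [Fintype.card_prod, Fintype.card_coe, Fintype.card_pi, Fintype.card_fin,
    Finset.prod_const, Finset.card_univ] at h1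
  have h2 : (N + 1) ^ n = (n * e + 1) ^ n * B ^ n := by
    rw [← mul_pow]; congr 1; simp only [N, B]; ring
  rw [h2] at h1
  exact Nat.le_of_mul_le_mul_right h1 (by positivity)

lemma totalDegree_pderiv_le' {n : ℕ} (i : Fin n) (p : MvPolynomial (Fin n) ℝ) :
    (pderiv i p).totalDegree ≤ p.totalDegree := by
  classical
  conv_lhs => rw [p.as_sum, map_sum]
  refine (totalDegree_finset_sum _ _).trans (Finset.sup_le fun s hs => ?_)
  rw [pderiv_monomial]
  refine (totalDegree_monomial_le _ _).trans ?_
  refine le_trans ?_ (le_totalDegree hs)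
  rw [Finsupp.sum_fintype _ _ (by simp), Finsupp.sum_fintype _ _ (by simp)]
  exact Finset.sum_le_sum fun j _ => by simp

lemma hasFDerivAt_eval {n : ℕ} (p : MvPolynomial (Fin n) ℝ) (x : Fin n → ℝ) :
    HasFDerivAt (fun x => eval x p)
      (∑ j, eval x (pderiv j p) • (ContinuousLinearMap.proj j : (Fin n → ℝ) →L[ℝ] ℝ)) x := by
  induction p using MvPolynomial.induction_on with
  | C a => simpa using hasFDerivAt_const a x
  | add p q hp hq =>
    simp only [map_add, add_smul, Finset.sum_add_distrib]
    exact hp.add hq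
  | mul_X p i hp =>
    simp only [map_mul, eval_X]
    have h2 : HasFDerivAt (fun x : Fin n → ℝ => x i) (ContinuousLinearMap.proj i : (Fin n → ℝ) →L[ℝ] ℝ) x :=
      (ContinuousLinearMap.proj i : (Fin n → ℝ) →L[ℝ] ℝ).hasFDerivAt
    refine (hp.mul h2).congr_fderiv ?_
    ext v
    simp only [ContinuousLinearMap.add_apply, ContinuousLinearMap.smul_apply,
      ContinuousLinearMap.sum_apply, ContinuousLinearMap.proj_apply, smul_eq_mul, Derivation.leibniz,
      pderiv_X, map_add, map_mul, eval_X, Pi.single_apply, add_mul, Finset.sum_add_distrib]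
    congr 1
    · rw [Finset.sum_eq_single i]
      · simp
      · intro b _ hb; simp [hb.symm]
      · simp
    · rw [Finset.mul_sum]
      apply Finset.sum_congr rfl; intro j _; ring

lemma exists_regular {n : ℕ} (u : MvPolynomial (Fin n) ℝ) (η : ℝ) (hη : 0 < η) :
    ∃ a : Fin n → ℝ, (∀ i, |a i| ≤ η) ∧ ∀ x : Fin n → ℝ, (∀ i, eval x (pderiv i u) = a i) →
      (Matrix.of fun i j => eval x (pderiv j (pderiv i u))).det ≠ 0 := by
  set F : (Fin n → ℝ) → (Fin n → ℝ) := fun x i => eval x (pderiv i u) with hF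
  set A : (Fin n → ℝ) → Matrix (Fin n) (Fin n) ℝ := fun x =>
    Matrix.of fun i j => eval x (pderiv j (pderiv i u)) with hA
  set F' : (Fin n → ℝ) → ((Fin n → ℝ) →L[ℝ] (Fin n → ℝ)) := fun x =>
    LinearMap.toContinuousLinearMap (Matrix.toLin' (A x))
  have hd : ∀ x, HasFDerivAt F (F' x) x := by
    intro x
    rw [hasFDerivAt_pi']
    intro i
    refine (hasFDerivAt_eval (pderiv i u) x).congr_fderiv ?_
    ext v
    simp [F', hA, Matrix.mulVec, dotProduct]
  have h0 := MeasureTheory.addHaar_image_eq_zero_of_det_fderivWithin_eq_zero MeasureTheory.volume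
    (s := {x | (A x).det = 0}) (f := F) (f' := F') (fun x _ => (hd x).hasFDerivWithinAt)
    (fun x hx => by
      rw [mem_setOf_eq] at hx
      rw [ContinuousLinearMap.det]
      simp only [F', LinearMap.coe_toContinuousLinearMap, LinearMap.det_toLin']
      exact hx)
  have hne : ¬ (Metric.ball (0 : Fin n → ℝ) η ⊆ F '' {x | (A x).det = 0}) := by
    intro hsub
    have := MeasureTheory.measure_mono_null hsub h0
    exact (Metric.measure_ball_pos MeasureTheory.volume (0 : Fin n → ℝ) hη).ne' this
  obtain ⟨a, ha, hna⟩ := Set.not_subset.mp hne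
  refine ⟨a, fun i => ?_, fun x hx hdet => hna ⟨x, hdet, funext hx⟩⟩
  rw [mem_ball_zero_iff] at ha
  exact (norm_le_pi_norm a i).trans ha.le

lemma mem_comp_of_closure {X : Type*} [TopologicalSpace X] {U : Set X} {z x : X} (hz : z ∈ U) (hx : x ∈ U)
    (hc : x ∈ closure (connectedComponentIn U z)) : x ∈ connectedComponentIn U z := by
  have h1 : IsPreconnected (insert x (connectedComponentIn U z)) :=
    isPreconnected_connectedComponentIn.subset_closure (Set.subset_insert _ _)
      (Set.insert_subset hc subset_closure)
  have h2 := h1.subset_connectedComponentIn (Set.mem_insert_of_mem _ (mem_connectedComponentIn hz))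
    (Set.insert_subset hx (connectedComponentIn_subset U z))
  exact h2 (Set.mem_insert _ _)

lemma card_components_le {n e : ℕ} (G : MvPolynomial (Fin n) ℝ) (hG : G.totalDegree ≤ e)
    (Z : Finset (Fin n → ℝ)) (hZ : ∀ z ∈ Z, eval z G ≠ 0)
    (hinj : ∀ z ∈ Z, ∀ z' ∈ Z, connectedComponentIn {x | eval x G ≠ 0} z
      = connectedComponentIn {x | eval x G ≠ 0} z' → z = z') :
    Z.card ≤ (n * (2 * e + 2) + 1) ^ n := by
  classical
  rcases Z.eq_empty_or_nonempty with rfl | hne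
  · simp
  obtain ⟨R, hR⟩ : ∃ R : ℝ, ∀ z ∈ Z, ∑ i, z i ^ 2 < R := by
    refine ⟨∑ z ∈ Z, ∑ i, z i ^ 2 + 1, fun z hz => ?_⟩
    have := Finset.single_le_sum (f := fun z : Fin n → ℝ => ∑ i, z i ^ 2)
      (fun z _ => Finset.sum_nonneg fun i _ => sq_nonneg (z i)) hz
    beta_reduce at this
    linarith
  set u : MvPolynomial (Fin n) ℝ := G ^ 2 * (C R - ∑ i, X i ^ 2) with hu
  have hue : ∀ x, eval x u = (eval x G) ^ 2 * (R - ∑ i, x i ^ 2) := by intro x; simp [hu]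
  have hudeg : u.totalDegree ≤ 2 * e + 2 := by
    refine (totalDegree_mul _ _).trans (add_le_add ?_ ?_)
    · exact (totalDegree_pow _ _).trans (Nat.mul_le_mul le_rfl hG)
    · refine (totalDegree_sub _ _).trans (max_le (by simp) ?_)
      refine (totalDegree_finset_sum _ _).trans (Finset.sup_le fun i _ => ?_)
      refine (totalDegree_pow _ _).trans ?_
      simp
  set U : Set (Fin n → ℝ) := {x | eval x G ≠ 0 ∧ ∑ i, x i ^ 2 < R} with hU
  have hUo : IsOpen U := by
    apply IsOpen.inter
    · exact isOpen_ne_fun (MvPolynomial.continuous_eval G) continuous_const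
    · exact isOpen_lt (f := fun x : Fin n → ℝ => ∑ i, x i ^ 2) (by fun_prop) continuous_const
  have hZU : ∀ z ∈ Z, z ∈ U := fun z hz => ⟨hZ z hz, hR z hz⟩
  have hupos : ∀ z ∈ Z, 0 < eval z u := by
    intro z hz; rw [hue]
    have := hZ z hz
    have := hR z hz
    have : 0 < R - ∑ i, z i ^ 2 := by linarith
    positivity
  obtain ⟨δ, hδ, hδ'⟩ : ∃ δ : ℝ, 0 < δ ∧ ∀ z ∈ Z, δ ≤ eval z u := by
    obtain ⟨z0, hz0, hmin⟩ := Z.exists_min_image (fun z => eval z u) hne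
    exact ⟨eval z0 u, hupos z0 hz0, hmin⟩
  have hRpos : 0 < R := by
    obtain ⟨z, hz⟩ := hne
    exact lt_of_le_of_lt (Finset.sum_nonneg fun i _ => sq_nonneg (z i)) (hR z hz)
  set η : ℝ := δ / (3 * (n + 1) * (1 + R)) with hη
  have hηpos : 0 < η := by positivity
  obtain ⟨a, ha1, ha2⟩ := exists_regular u η hηpos
  have hsmall : ∀ x : Fin n → ℝ, ∑ i, x i ^ 2 ≤ R → |∑ i, a i * x i| ≤ δ / 3 := by
    intro x hx
    have hxi : ∀ i, |x i| ≤ 1 + R := by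
      intro i
      have h1 := Finset.single_le_sum (f := fun i => x i ^ 2) (fun i _ => sq_nonneg (x i)) (Finset.mem_univ i)
      beta_reduce at h1
      rw [abs_le]; constructor <;> nlinarith
    calc |∑ i, a i * x i| ≤ ∑ i, |a i * x i| := Finset.abs_sum_le_sum_abs _ _
      _ ≤ ∑ i : Fin n, η * (1 + R) := Finset.sum_le_sum fun i _ => by
          rw [abs_mul]; exact mul_le_mul (ha1 i) (hxi i) (abs_nonneg _) hηpos.le
      _ = n * (η * (1 + R)) := by simp
      _ ≤ (n + 1) * (η * (1 + R)) := by gcongr; linarith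
      _ = δ / 3 := by rw [hη]; field_simp
  have hcrit : ∀ z ∈ Z, ∃ x ∈ connectedComponentIn U z, ∀ i, eval x (pderiv i u) = a i := by
    intro z hz
    set Ω := connectedComponentIn U z with hΩ
    have hΩo : IsOpen Ω := hUo.connectedComponentIn
    have hsub : closure Ω ⊆ {x | ∑ i, x i ^ 2 ≤ R} := by
      apply closure_minimal
      · intro x hx; exact (connectedComponentIn_subset U z hx).2.le
      · exact isClosed_le (by fun_prop) continuous_const
    have hcomp : IsCompact (closure Ω) := by
      apply (isCompact_closedBall (0 : Fin n → ℝ) (1 + R)).of_isClosed_subset isClosed_closure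
      intro x hx
      rw [mem_closedBall_zero_iff, pi_norm_le_iff_of_nonneg (by linarith)]
      intro i
      have h0 : ∑ i, x i ^ 2 ≤ R := hsub hx
      have h1 := Finset.single_le_sum (f := fun i => x i ^ 2) (fun i _ => sq_nonneg (x i)) (Finset.mem_univ i)
      beta_reduce at h1
      rw [Real.norm_eq_abs, abs_le]; constructor <;> nlinarith
    set ua : MvPolynomial (Fin n) ℝ := u - ∑ i, C (a i) * X i with hua
    have huae : ∀ x, eval x ua = eval x u - ∑ i, a i * x i := by intro x; simp [hua]
    have hzΩ : z ∈ Ω := mem_connectedComponentIn (hZU z hz)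
    obtain ⟨x, hx, hmax⟩ := hcomp.exists_isMaxOn ⟨z, subset_closure hzΩ⟩
      (MvPolynomial.continuous_eval ua).continuousOn
    have hxΩ : x ∈ Ω := by
      apply mem_comp_of_closure (hZU z hz) _ hx
      by_contra hxU
      have h1 : eval z ua ≤ eval x ua := hmax (subset_closure hzΩ)
      have h2 : eval x u ≤ 0 := by
        rw [hue]
        by_cases hg : eval x G = 0
        · simp [hg]
        · have : ¬ ∑ i, x i ^ 2 < R := fun h => hxU ⟨hg, h⟩
          exact mul_nonpos_of_nonneg_of_nonpos (sq_nonneg _) (by linarith)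
      rw [huae, huae] at h1
      have h3 := abs_le.mp (hsmall x (hsub hx))
      have h4 := abs_le.mp (hsmall z (hR z hz).le)
      have h5 := hδ' z hz
      linarith [h3.1, h3.2, h4.1, h4.2]
    refine ⟨x, hxΩ, fun i => ?_⟩
    have hloc : IsLocalMax (fun x => eval x ua) x :=
      (hmax.on_subset subset_closure).isLocalMax (hΩo.mem_nhds hxΩ)
    have hz0 := hloc.hasFDerivAt_eq_zero (hasFDerivAt_eval ua x)
    have h6 := congrArg (fun L : (Fin n → ℝ) →L[ℝ] ℝ => L (Pi.single i 1)) hz0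
    simp [ContinuousLinearMap.sum_apply, Pi.single_apply, hua, pderiv_X, pderiv_C, Derivation.leibniz] at h6
    linarith
  choose! w hw1 hw2 using hcrit
  have hwinj : Set.InjOn w Z := by
    intro z hz z' hz' hww
    apply hinj z hz z' hz'
    have hUsub : U ⊆ {x | eval x G ≠ 0} := fun x hx => hx.1
    have h1 := connectedComponentIn_mono z hUsub (hw1 z hz)
    have h2 := connectedComponentIn_mono z' hUsub (hw1 z' hz')
    rw [← hww] at h2
    exact (connectedComponentIn_eq h1).trans (connectedComponentIn_eq h2).symm
  rw [← Finset.card_image_of_injOn hwinj]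
  apply card_nondeg_zeros_le (fun i => pderiv i u - C (a i)) (Z.image w) (e := 2 * e + 2)
  · intro i
    refine (totalDegree_sub _ _).trans (max_le ((totalDegree_pderiv_le' i u).trans hudeg) (by simp))
  · intro x hx i
    obtain ⟨z, hz, rfl⟩ := Finset.mem_image.mp hx
    simp [hw2 z hz i]
  · intro x hx
    obtain ⟨z, hz, rfl⟩ := Finset.mem_image.mp hx
    have := ha2 (w z) (hw2 z hz)
    simpa [pderiv_C] using this

/-- Polynomials vanishing on the points indexed by `R`. -/
def vanSub {n : ℕ} {σ : Type*} (φ : σ → Fin n → ℝ) (R : Finset σ) :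
    Submodule ℝ (MvPolynomial (Fin n) ℝ) where
  carrier := {g | ∀ r ∈ R, eval (φ r) g = 0}
  add_mem' := by
    intro a b ha hb x hx
    simp [ha x hx, hb x hx]
  zero_mem' := by
    intro x hx
    simp
  smul_mem' := by
    intro c f hf x hx
    simp [hf x hx]

lemma mem_vanSub {n : ℕ} {σ : Type*} (φ : σ → Fin n → ℝ) (R : Finset σ)
    (g : MvPolynomial (Fin n) ℝ) : g ∈ vanSub φ R ↔ ∀ r ∈ R, eval (φ r) g = 0 := Iff.rfl

lemma exists_poly_spaces (n : ℕ) (hn : 0 < n) :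
    ∃ V : ℕ → Submodule ℝ (MvPolynomial (Fin n) ℝ), ∀ m, 0 < m →
      Module.Finite ℝ (V m) ∧ Module.finrank ℝ (V m) = m ∧
      ∃ N : ℕ, N ^ n < m ∧ ∀ g ∈ V m, g.totalDegree ≤ n * N := by
  have h : ∀ m : ℕ, ∃ W : Submodule ℝ (MvPolynomial (Fin n) ℝ), 0 < m →
      Module.Finite ℝ W ∧ Module.finrank ℝ W = m ∧
      ∃ N : ℕ, N ^ n < m ∧ ∀ g ∈ W, g.totalDegree ≤ n * N := by
    intro m
    by_cases hm : 0 < m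
    swap
    · exact ⟨⊥, fun h => absurd h hm⟩
    have hex : ∃ N : ℕ, m ≤ (N + 1) ^ n :=
      ⟨m, (Nat.le_succ m).trans (Nat.le_self_pow hn.ne' _)⟩
    classical
    set N := Nat.find hex with hN
    have h1 : m ≤ (N + 1) ^ n := Nat.find_spec hex
    have h2 : N ^ n < m := by
      rcases Nat.eq_zero_or_pos N with h0 | h0
      · rw [h0, zero_pow hn.ne']; exact hm
      · have := Nat.find_min hex (m := N - 1) (by omega)
        rw [Nat.sub_add_cancel h0] at this
        omega
    have hfin := finite_restrictDegree n N
    have hfr := finrank_restrictDegree n N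
    obtain ⟨f, hf⟩ := exists_linearIndependent_of_le_finrank (R := ℝ)
      (M := restrictDegree (Fin n) ℝ N) (n := m) (by rw [hfr]; exact h1)
    obtain ⟨W0, hW0⟩ : ∃ W0 : Submodule ℝ (restrictDegree (Fin n) ℝ N), Module.finrank ℝ W0 = m :=
      ⟨Submodule.span ℝ (Set.range f), by rw [finrank_span_eq_card hf]; simp⟩
    refine ⟨W0.map (restrictDegree (Fin n) ℝ N).subtype, fun _ => ⟨inferInstance, ?_, N, h2, ?_⟩⟩
    · rw [← hW0]
      exact (Submodule.equivMapOfInjective _ (Submodule.injective_subtype _) W0).finrank_eq.symm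
    · rintro g ⟨g', _, rfl⟩
      have hg := g'.2
      rw [mem_restrictDegree] at hg
      refine Finset.sup_le fun s hs => ?_
      rw [Finsupp.sum_fintype _ _ (by simp)]
      calc ∑ i, s i ≤ ∑ i : Fin n, N := Finset.sum_le_sum fun i _ => hg s hs i
        _ = n * N := by simp
  choose V hV using h
  exact ⟨V, hV⟩

lemma exists_ne_zero_in_open {n : ℕ} (U : Set (Fin n → ℝ)) (hU : IsOpen U) (hne : U.Nonempty)
    (p : MvPolynomial (Fin n) ℝ) (hp : p ≠ 0) : ∃ x ∈ U, eval x p ≠ 0 := by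
  by_contra hcon
  push Not at hcon
  obtain ⟨x0, hx0⟩ := hne
  obtain ⟨ε, hε, hball⟩ := Metric.isOpen_iff.1 hU x0 hx0
  apply hp
  apply MvPolynomial.funext_set (fun i => Metric.ball (x0 i) ε)
  · intro i
    exact (Real.ball_eq_Ioo (x0 i) ε) ▸ Set.Ioo_infinite (by linarith)
  · intro x hx
    rw [map_zero]
    apply hcon
    apply hball
    rw [ball_pi _ hε]
    exact hx

/-- Genericity up to dimension `M0`. -/
def Gen {n : ℕ} {σ : Type*} (V : ℕ → Submodule ℝ (MvPolynomial (Fin n) ℝ)) (M0 : ℕ)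
    (φ : σ → Fin n → ℝ) (S : Finset σ) : Prop :=
  ∀ m, 0 < m → m ≤ M0 → ∀ R ⊆ S,
    Module.finrank ℝ (V m ⊓ vanSub φ R : Submodule ℝ (MvPolynomial (Fin n) ℝ)) ≤ m - R.card

lemma exists_gen {n : ℕ} {σ : Type*} (V : ℕ → Submodule ℝ (MvPolynomial (Fin n) ℝ))
    (hV : ∀ m, 0 < m → Module.Finite ℝ (V m) ∧ Module.finrank ℝ (V m) = m) (M0 : ℕ)
    (U : σ → Set (Fin n → ℝ)) (hU : ∀ s, IsOpen (U s)) (hUne : ∀ s, (U s).Nonempty)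
    (S : Finset σ) : ∃ φ : σ → Fin n → ℝ, (∀ s, φ s ∈ U s) ∧ Gen V M0 φ S := by
  classical
  induction S using Finset.induction_on with
  | empty =>
    choose φ hφ using hUne
    refine ⟨φ, hφ, ?_⟩
    intro m hm hmM R hR
    obtain rfl : R = ∅ := Finset.subset_empty.1 hR
    have := (hV m hm).1
    have h1 := Submodule.finrank_mono (inf_le_left : V m ⊓ vanSub φ ∅ ≤ V m)
    rw [(hV m hm).2] at h1
    simpa using h1
  | insert s0 S hs0 ih =>
    obtain ⟨φ, hφ, hgen⟩ := ih
    have hch : ∀ mR : ℕ × Finset σ, ∃ g : MvPolynomial (Fin n) ℝ, g ≠ 0 ∧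
        (V mR.1 ⊓ vanSub φ mR.2 ≠ ⊥ → g ∈ V mR.1 ⊓ vanSub φ mR.2) := by
      intro mR
      by_cases h : V mR.1 ⊓ vanSub φ mR.2 = ⊥
      · exact ⟨1, one_ne_zero, fun h' => absurd h h'⟩
      · obtain ⟨g, hg, hg0⟩ := Submodule.exists_mem_ne_zero_of_ne_bot h
        exact ⟨g, hg0, fun _ => hg⟩
    choose G hG0 hG using hch
    obtain ⟨x, hxU, hx⟩ := exists_ne_zero_in_open (U s0) (hU s0) (hUne s0)
      (∏ mR ∈ (Finset.range (M0 + 1)) ×ˢ S.powerset, G mR)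
      (Finset.prod_ne_zero_iff.2 fun mR _ => hG0 mR)
    rw [map_prod, Finset.prod_ne_zero_iff] at hx
    refine ⟨Function.update φ s0 x, ?_, ?_⟩
    · intro s
      by_cases h : s = s0
      · subst h; simpa using hxU
      · simpa [Function.update_of_ne h] using hφ s
    · intro m hm hmM R hR
      have := (hV m hm).1
      by_cases hsR : s0 ∈ R
      · set R0 := R.erase s0 with hR0
        have hR0S : R0 ⊆ S := by
          intro r hr
          rw [hR0, Finset.mem_erase] at hr
          exact (Finset.mem_insert.1 (hR hr.2)).resolve_left hr.1
        have hcard : R.card = R0.card + 1 := by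
          rw [hR0, Finset.card_erase_add_one hsR]
        have h1 := hgen m hm hmM R0 hR0S
        have hle : V m ⊓ vanSub (Function.update φ s0 x) R ≤ V m ⊓ vanSub φ R0 := by
          refine inf_le_inf le_rfl ?_
          intro g hg r hr
          rw [hR0, Finset.mem_erase] at hr
          have := hg r hr.2
          rwa [Function.update_of_ne hr.1] at this
        by_cases hb : V m ⊓ vanSub φ R0 = ⊥
        · rw [hb] at hle
          rw [le_bot_iff.1 hle]
          simp
        · have hlt : V m ⊓ vanSub (Function.update φ s0 x) R < V m ⊓ vanSub φ R0 := by
            refine lt_of_le_of_ne hle fun heq => ?_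
            have hg := hG (m, R0) hb
            rw [← heq] at hg
            have h3 := hg.2 s0 hsR
            rw [Function.update_self] at h3
            exact hx (m, R0) (by simp [hR0S]; omega) h3
          have hfin : Module.Finite ℝ (V m ⊓ vanSub φ R0 : Submodule ℝ (MvPolynomial (Fin n) ℝ)) :=
            Module.Finite.of_injective (Submodule.inclusion (inf_le_left : V m ⊓ vanSub φ R0 ≤ V m))
              (Submodule.inclusion_injective _)
          have h2 := Submodule.finrank_lt_finrank_of_lt hlt
          omega
      · have hRS : R ⊆ S := by
          intro r hr
          refine (Finset.mem_insert.1 (hR hr)).resolve_left ?_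
          rintro rfl; exact hsR hr
        have heq : vanSub (Function.update φ s0 x) R = vanSub φ R := by
          ext g
          rw [mem_vanSub, mem_vanSub]
          refine forall₂_congr fun r hr => ?_
          rw [Function.update_of_ne]
          rintro rfl; exact hsR hr
        rw [heq]
        exact hgen m hm hmM R hRS

lemma exists_dependency {n : ℕ} {σ : Type*} [DecidableEq σ] (W : Submodule ℝ (MvPolynomial (Fin n) ℝ))
    [Module.Finite ℝ W] (φ : σ → Fin n → ℝ) (R : Finset σ) (h : Module.finrank ℝ W < R.card) :
    ∃ l : σ → ℝ, (∀ g ∈ W, ∑ r ∈ R, l r * eval (φ r) g = 0) ∧ ∃ r ∈ R, l r ≠ 0 := by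
  let ev : R → Module.Dual ℝ W := fun r => ((MvPolynomial.aeval (φ r)).toLinearMap).comp W.subtype
  have hev : ¬ LinearIndependent ℝ ev := by
    intro hli
    have := hli.fintype_card_le_finrank
    rw [Subspace.dual_finrank_eq, Fintype.card_coe] at this
    omega
  rw [Fintype.not_linearIndependent_iff] at hev
  obtain ⟨l, hl, r0, hr0⟩ := hev
  refine ⟨fun r => if h : r ∈ R then l ⟨r, h⟩ else 0, ?_, r0, r0.2, by simpa using hr0⟩
  intro g hg
  have h2 := congrArg (fun f : Module.Dual ℝ W => f ⟨g, hg⟩) hl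
  rw [← Finset.sum_coe_sort R]
  simpa [ev, MvPolynomial.aeval_eq_eval, LinearMap.sum_apply] using h2

lemma card_opp_pairs {σ : Type*} [DecidableEq σ] (P : Finset σ) (l : σ → ℝ) :
    2 * (P.offDiag.filter (fun q => l q.1 * l q.2 < 0)).card ≤ P.card ^ 2 := by
  set p := P.filter (fun x => 0 < l x)
  set q := P.filter (fun x => l x < 0)
  have h1 : (P.offDiag.filter (fun q => l q.1 * l q.2 < 0)) ⊆ p ×ˢ q ∪ q ×ˢ p := by
    intro z hz
    simp only [Finset.mem_filter, Finset.mem_offDiag, mul_neg_iff] at hz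
    simp only [p, q, Finset.mem_union, Finset.mem_product, Finset.mem_filter]
    tauto
  have h2 : p.card + q.card ≤ P.card := by
    rw [← Finset.card_union_of_disjoint]
    · apply Finset.card_le_card
      intro x hx
      simp only [p, q, Finset.mem_union, Finset.mem_filter] at hx
      tauto
    · rw [Finset.disjoint_left]
      intro x hx hx'
      simp only [p, q, Finset.mem_filter] at hx hx'
      linarith [hx.2, hx'.2]
  have h3 := (Finset.card_le_card h1).trans (Finset.card_union_le _ _)
  rw [Finset.card_product, Finset.card_product] at h3
  calc _ ≤ 2 * (p.card * q.card + q.card * p.card) := by omega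
    _ ≤ (p.card + q.card) ^ 2 := by
      zify
      nlinarith [sq_nonneg ((p.card : ℤ) - q.card)]
    _ ≤ _ := Nat.pow_le_pow_left h2 2

/-- `w` picks a nonzero element of `W` vanishing on the given points. -/
def Picks {n : ℕ} {σ : Type*} (W : Submodule ℝ (MvPolynomial (Fin n) ℝ)) (m : ℕ)
    (φ : σ → Fin n → ℝ) (S : Finset σ) (w : Finset σ → MvPolynomial (Fin n) ℝ) : Prop :=
  ∀ R ⊆ S, R.card + 1 = m → w R ∈ W ∧ (∀ r ∈ R, eval (φ r) (w R) = 0) ∧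
    ∀ s ∈ S, s ∉ R → eval (φ s) (w R) ≠ 0

lemma exists_picks {n : ℕ} {σ : Type*} [DecidableEq σ] (V : ℕ → Submodule ℝ (MvPolynomial (Fin n) ℝ))
    (hV : ∀ m, 0 < m → Module.Finite ℝ (V m) ∧ Module.finrank ℝ (V m) = m) (M0 m : ℕ)
    (hm : 0 < m) (hmM : m ≤ M0) (φ : σ → Fin n → ℝ) (S : Finset σ) (hgen : Gen V M0 φ S) :
    ∃ w, Picks (V m) m φ S w := by
  have h : ∀ R : Finset σ, ∃ g, R ⊆ S → R.card + 1 = m → g ∈ V m ∧ (∀ r ∈ R, eval (φ r) g = 0) ∧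
    ∀ s ∈ S, s ∉ R → eval (φ s) g ≠ 0 := by
    intro R
    by_cases hR : R ⊆ S
    swap
    · exact ⟨0, fun h => absurd h hR⟩
    by_cases hRm : R.card + 1 = m
    swap
    · exact ⟨0, fun _ h => absurd h hRm⟩
    have := (hV m hm).1
    have hfr := (hV m hm).2
    let ev : V m →ₗ[ℝ] (R → ℝ) :=
      (LinearMap.pi fun r : R => (MvPolynomial.aeval (φ r)).toLinearMap).comp (V m).subtype
    have hker : LinearMap.ker ev ≠ ⊥ := by
      apply LinearMap.ker_ne_bot_of_finrank_lt
      rw [hfr]; simp; omega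
    obtain ⟨g, hg, hg0⟩ := Submodule.exists_mem_ne_zero_of_ne_bot hker
    have hgR : ∀ r ∈ R, eval (φ r) (g : MvPolynomial (Fin n) ℝ) = 0 := by
      intro r hr
      have := congrFun (LinearMap.mem_ker.1 hg) ⟨r, hr⟩
      simpa [ev, MvPolynomial.aeval_eq_eval] using this
    refine ⟨g, fun _ _ => ⟨g.2, hgR, ?_⟩⟩
    intro s hs hsR h0
    have h1 := hgen m hm hmM (insert s R) (Finset.insert_subset hs hR)
    rw [Finset.card_insert_of_notMem hsR, hRm, Nat.sub_self] at h1
    have hfin : Module.Finite ℝ (V m ⊓ vanSub φ (insert s R) : Submodule ℝ (MvPolynomial (Fin n) ℝ)) :=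
      Module.Finite.of_injective (Submodule.inclusion (inf_le_left : V m ⊓ vanSub φ (insert s R) ≤ V m))
        (Submodule.inclusion_injective _)
    have h2 := Submodule.finrank_eq_zero.1 (Nat.le_zero.1 h1)
    have h3 : (g : MvPolynomial (Fin n) ℝ) ∈ V m ⊓ vanSub φ (insert s R) := by
      refine ⟨g.2, ?_⟩
      intro r hr
      rcases Finset.mem_insert.1 hr with rfl | hr
      · exact h0
      · exact hgR r hr
    rw [h2, Submodule.mem_bot] at h3
    exact hg0 (by ext1; exact h3)
  choose w hw using h
  exact ⟨w, hw⟩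

lemma class_average {n : ℕ} {σ : Type*} [DecidableEq σ] (W : Submodule ℝ (MvPolynomial (Fin n) ℝ))
    [Module.Finite ℝ W] (m : ℕ) (hfr : Module.finrank ℝ W = m)
    (φ : σ → Fin n → ℝ) (S : Finset σ) (w : Finset σ → MvPolynomial (Fin n) ℝ)
    (hw : Picks W m φ S w) (Rest A : Finset σ) (hRest : Rest ⊆ S) (hA : A ⊆ S)
    (hd : Disjoint Rest A) (c : ℕ) (hm : Rest.card + c + 1 = m) :
    2 * (c + 1) * ∑ Q ∈ A.powersetCard c, ((A \ Q).offDiag.filter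
      (fun q => 0 < eval (φ q.1) (w (Rest ∪ Q)) * eval (φ q.2) (w (Rest ∪ Q)))).card
    ≤ (c + 2) * A.offDiag.card * (A.powersetCard c).card := by
  have step1 : ∑ Q ∈ A.powersetCard c, ((A \ Q).offDiag.filter
      (fun q => 0 < eval (φ q.1) (w (Rest ∪ Q)) * eval (φ q.2) (w (Rest ∪ Q)))).card
      ≤ ∑ P ∈ A.powersetCard (c + 2), (P.offDiag.filter
      (fun q => 0 < eval (φ q.1) (w (Rest ∪ (P \ {q.1, q.2}))) *
        eval (φ q.2) (w (Rest ∪ (P \ {q.1, q.2}))))).card := by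
    rw [← Finset.card_sigma, ← Finset.card_sigma]
    apply Finset.card_le_card_of_injOn (fun z => ⟨z.1 ∪ {z.2.1, z.2.2}, z.2⟩)
    · rintro ⟨Q, x, y⟩ hz
      simp only [Finset.coe_sigma, Set.mem_sigma_iff, Finset.mem_coe, Finset.mem_powersetCard,
        Finset.mem_filter, Finset.mem_offDiag, Finset.mem_sdiff] at hz ⊢
      obtain ⟨⟨hQ, hQc⟩, ⟨⟨hxA, hxQ⟩, ⟨hyA, hyQ⟩, hxy⟩, hpos⟩ := hz
      have hdis : Disjoint Q {x, y} := by
        rw [Finset.disjoint_right]; intro z hz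
        simp only [Finset.mem_insert, Finset.mem_singleton] at hz
        rcases hz with rfl | rfl <;> assumption
      have hsd : (Q ∪ {x, y}) \ {x, y} = Q := by
        rw [Finset.union_sdiff_right, Finset.sdiff_eq_self_of_disjoint hdis]
      refine ⟨⟨?_, ?_⟩, ⟨by simp, by simp, hxy⟩, ?_⟩
      · apply Finset.union_subset hQ
        intro z hz
        simp only [Finset.mem_insert, Finset.mem_singleton] at hz
        rcases hz with rfl | rfl <;> assumption
      · rw [Finset.card_union_of_disjoint hdis, hQc, Finset.card_pair hxy]
      · rw [hsd]; exact hpos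
    · rintro ⟨Q, x, y⟩ hz ⟨Q', x', y'⟩ hz' heq
      simp only [Finset.coe_sigma, Set.mem_sigma_iff, Finset.mem_coe, Finset.mem_powersetCard,
        Finset.mem_filter, Finset.mem_offDiag, Finset.mem_sdiff] at hz hz'
      simp only [Sigma.mk.injEq, heq_eq_eq, Prod.mk.injEq] at heq ⊢
      obtain ⟨h1, rfl, rfl⟩ := heq
      refine ⟨?_, rfl, rfl⟩
      ext z
      have := Finset.ext_iff.1 h1 z
      simp only [Finset.mem_union, Finset.mem_insert, Finset.mem_singleton] at this
      by_cases hzx : z = x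
      · subst hzx; tauto
      by_cases hzy : z = y
      · subst hzy; tauto
      tauto
  have step2 : ∀ P ∈ A.powersetCard (c + 2), 2 * (P.offDiag.filter
      (fun q => 0 < eval (φ q.1) (w (Rest ∪ (P \ {q.1, q.2}))) *
        eval (φ q.2) (w (Rest ∪ (P \ {q.1, q.2}))))).card ≤ (c + 2) ^ 2 := by
    intro P hP
    rw [Finset.mem_powersetCard] at hP
    have hdP : Disjoint Rest P := hd.mono_right hP.1
    have hcard : (Rest ∪ P).card = m + 1 := by
      rw [Finset.card_union_of_disjoint hdP, hP.2]; omega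
    have hsub : Rest ∪ P ⊆ S := Finset.union_subset hRest (hP.1.trans hA)
    obtain ⟨l, hl, x0, hx0, hlx0⟩ := exists_dependency W φ (Rest ∪ P) (by omega)
    have key : ∀ x ∈ Rest ∪ P, ∀ y ∈ Rest ∪ P, x ≠ y → ∀ R, R = (Rest ∪ P) \ {x, y} →
        l x * eval (φ x) (w R) + l y * eval (φ y) (w R) = 0 ∧ eval (φ x) (w R) ≠ 0 ∧
          eval (φ y) (w R) ≠ 0 := by
      intro x hx y hy hxy R hR
      have hpair : ({x, y} : Finset σ) ⊆ Rest ∪ P := by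
        intro z hz
        simp only [Finset.mem_insert, Finset.mem_singleton] at hz
        rcases hz with rfl | rfl <;> assumption
      have hRc : R.card + 1 = m := by
        rw [hR, Finset.card_sdiff_of_subset hpair, Finset.card_pair hxy]; omega
      obtain ⟨h1, h2, h3⟩ := hw R (by rw [hR]; exact Finset.sdiff_subset.trans hsub) hRc
      refine ⟨?_, h3 x (hsub hx) (by simp [hR]), h3 y (hsub hy) (by simp [hR])⟩
      have h4 := hl _ h1
      rw [← Finset.sum_sdiff hpair, ← hR, Finset.sum_pair hxy,
        Finset.sum_eq_zero (s := R) (fun r hr => by rw [h2 r hr, mul_zero])] at h4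
      linarith
    have hlP : ∀ y ∈ Rest ∪ P, l y ≠ 0 := by
      intro y hy h0
      by_cases hxy : x0 = y
      · subst hxy; exact hlx0 h0
      · obtain ⟨h1, h2, h3⟩ := key x0 hx0 y hy hxy _ rfl
        rw [h0, zero_mul, add_zero] at h1
        rcases mul_eq_zero.1 h1 with h | h
        · exact hlx0 h
        · exact h2 h
    rw [← hP.2]
    refine le_trans (Nat.mul_le_mul le_rfl (Finset.card_le_card ?_)) (card_opp_pairs P l)
    rintro ⟨x, y⟩ hz
    simp only [Finset.mem_filter, Finset.mem_offDiag] at hz ⊢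
    obtain ⟨⟨hx, hy, hxy⟩, hpos⟩ := hz
    refine ⟨⟨hx, hy, hxy⟩, ?_⟩
    have hR : Rest ∪ (P \ {x, y}) = (Rest ∪ P) \ {x, y} := by
      rw [Finset.union_sdiff_distrib]
      congr 1
      rw [Finset.sdiff_eq_self_of_disjoint]
      apply hdP.mono_right
      intro z hz
      simp only [Finset.mem_insert, Finset.mem_singleton] at hz
      rcases hz with rfl | rfl <;> assumption
    obtain ⟨h1, h2, h3⟩ := key x (Finset.mem_union_right _ hx) y (Finset.mem_union_right _ hy) hxy _ hR
    have h4 := hlP y (Finset.mem_union_right _ hy)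
    generalize eval (φ x) (w (Rest ∪ (P \ {x, y}))) = a at *
    generalize eval (φ y) (w (Rest ∪ (P \ {x, y}))) = b at *
    have h5 : (l x * l y) * (a * b) = - (l y * b) ^ 2 := by
      have : l x * a = - (l y * b) := by linarith
      calc (l x * l y) * (a * b) = (l x * a) * (l y * b) := by ring
        _ = _ := by rw [this]; ring
    have h6 : 0 < (l y * b) ^ 2 := by positivity
    by_contra hcon
    push Not at hcon
    have := mul_nonneg hcon hpos.le
    linarith
  have step3 : 2 * ∑ P ∈ A.powersetCard (c + 2), (P.offDiag.filter
      (fun q => 0 < eval (φ q.1) (w (Rest ∪ (P \ {q.1, q.2}))) *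
        eval (φ q.2) (w (Rest ∪ (P \ {q.1, q.2}))))).card ≤ A.card.choose (c + 2) * (c + 2) ^ 2 := by
    rw [Finset.mul_sum]
    refine (Finset.sum_le_sum step2).trans ?_
    rw [Finset.sum_const, Finset.card_powersetCard, smul_eq_mul]
  rw [Finset.card_powersetCard, Finset.offDiag_card]
  set a := A.card
  have e1 := Nat.choose_succ_right_eq a (c + 1)
  have e2 := Nat.choose_succ_right_eq a c
  calc 2 * (c + 1) * _ ≤ 2 * (c + 1) * _ := Nat.mul_le_mul le_rfl step1
    _ = (c + 1) * (2 * _) := by ring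
    _ ≤ (c + 1) * (a.choose (c + 2) * (c + 2) ^ 2) := Nat.mul_le_mul le_rfl step3
    _ = (c + 2) * ((c + 1) * (a.choose (c + 1 + 1) * (c + 1 + 1))) := by ring
    _ = (c + 2) * ((a.choose (c + 1) * (c + 1)) * (a - (c + 1))) := by rw [e1]; ring
    _ = (c + 2) * ((a - c) * (a - (c + 1))) * a.choose c := by rw [e2]; ring
    _ ≤ (c + 2) * (a * (a - 1)) * a.choose c := by
      gcongr <;> omega
    _ = (c + 2) * (a * a - a) * a.choose c := by rw [Nat.mul_sub, mul_one]

lemma sum_piFinset_update {L β : Type*} [Fintype L] [DecidableEq L] [DecidableEq β]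
    (X : L → Finset β) (i : L) (F : (L → β) → ℕ) :
    (X i).card * ∑ R ∈ Fintype.piFinset X, F R
      = ∑ R ∈ Fintype.piFinset X, ∑ Q ∈ X i, F (Function.update R i Q) := by
  rw [← Finset.sum_product', ← smul_eq_mul, ← Finset.sum_const]
  rw [Finset.sum_comm, ← Finset.sum_product']
  apply Finset.sum_nbij' (fun z => (Function.update z.1 i z.2, z.1 i))
    (fun z => (Function.update z.1 i z.2, z.1 i))
  · rintro ⟨R, Q⟩ hz
    simp only [Finset.mem_product, Fintype.mem_piFinset] at hz ⊢
    refine ⟨fun j => ?_, hz.1 i⟩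
    by_cases h : j = i
    · subst h; simpa using hz.2
    · simpa [Function.update_of_ne h] using hz.1 j
  · rintro ⟨R, Q⟩ hz
    simp only [Finset.mem_product, Fintype.mem_piFinset] at hz ⊢
    refine ⟨fun j => ?_, hz.1 i⟩
    by_cases h : j = i
    · subst h; simpa using hz.2
    · simpa [Function.update_of_ne h] using hz.1 j
  · rintro ⟨R, Q⟩ hz; simp
  · rintro ⟨R, Q⟩ hz; simp
  · rintro ⟨R, Q⟩ hz; simp

lemma ham_step {n : ℕ} {σ : Type*} [DecidableEq σ]
    (V : ℕ → Submodule ℝ (MvPolynomial (Fin n) ℝ))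
    (hV : ∀ m, 0 < m → Module.Finite ℝ (V m) ∧ Module.finrank ℝ (V m) = m ∧
      ∃ N : ℕ, N ^ n < m ∧ ∀ g ∈ V m, g.totalDegree ≤ n * N) (M0 : ℕ)
    (φ : σ → Fin n → ℝ) (S : Finset σ) (hgen : Gen V M0 φ S) (hM0 : S.card + 1 ≤ M0)
    {L : Type*} [Fintype L] [DecidableEq L] (l : σ → L) (c : ℕ) :
    ∃ (S' : Finset σ) (g : MvPolynomial (Fin n) ℝ), S' ⊆ S ∧ (S \ S').card ≤ c * Fintype.card L ∧
      (∃ N : ℕ, N ^ n ≤ c * Fintype.card L ∧ g.totalDegree ≤ n * N) ∧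
      (∀ s ∈ S', eval (φ s) g ≠ 0) ∧
      2 * (c + 1) * (S'.offDiag.filter (fun q => l q.1 = l q.2 ∧
          0 < eval (φ q.1) g * eval (φ q.2) g)).card
        ≤ (c + 2) * (S.offDiag.filter (fun q => l q.1 = l q.2)).card := by
  set A : L → Finset σ := fun i => S.filter (fun s => l s = i) with hA
  set X : L → Finset (Finset σ) := fun i => (A i).powersetCard (min c (A i).card) with hX
  set m := ∑ i, min c (A i).card + 1 with hm
  have hAS : ∀ i, A i ⊆ S := fun i => Finset.filter_subset _ _
  have hsumA : ∑ i, (A i).card = S.card := by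
    rw [Finset.card_eq_sum_card_fiberwise (f := l) (t := Finset.univ) (by simp)]
  have hmM : m ≤ M0 := by
    have : ∑ i, min c (A i).card ≤ ∑ i, (A i).card := Finset.sum_le_sum fun i _ => min_le_right _ _
    omega
  have hmc : m ≤ c * Fintype.card L + 1 := by
    have : ∑ i, min c (A i).card ≤ ∑ i : L, c := Finset.sum_le_sum fun i _ => min_le_left _ _
    simp only [Finset.sum_const, Finset.card_univ, smul_eq_mul] at this
    rw [mul_comm] at this
    omega
  obtain ⟨hfin, hfr, N, hN, hdeg⟩ := hV m (by omega)
  obtain ⟨w, hw⟩ := exists_picks V (fun m hm => ⟨(hV m hm).1, (hV m hm).2.1⟩) M0 m (by omega) hmM φ S hgen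
  set u : (L → Finset σ) → Finset σ := fun R => Finset.univ.biUnion R with hu
  have hAd : ∀ i j, i ≠ j → Disjoint (A i) (A j) := by
    intro i j hij
    rw [Finset.disjoint_left]
    intro x hx hx'
    simp only [hA, Finset.mem_filter] at hx hx'
    exact hij (hx.2.symm.trans hx'.2)
  have hRA : ∀ R ∈ Fintype.piFinset X, ∀ i, R i ⊆ A i ∧ (R i).card = min c (A i).card := by
    intro R hR i
    have := (Fintype.mem_piFinset.1 hR) i
    rwa [hX, Finset.mem_powersetCard] at this
  have huS : ∀ R ∈ Fintype.piFinset X, u R ⊆ S := by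
    intro R hR x hx
    simp only [hu, Finset.mem_biUnion] at hx
    obtain ⟨i, _, hi⟩ := hx
    exact hAS i ((hRA R hR i).1 hi)
  have hucard : ∀ R ∈ Fintype.piFinset X, (u R).card + 1 = m := by
    intro R hR
    rw [hu, Finset.card_biUnion, hm]
    · simp only [add_left_inj]
      exact Finset.sum_congr rfl fun i _ => (hRA R hR i).2
    · intro i _ j _ hij
      exact (hAd i j hij).mono (hRA R hR i).1 (hRA R hR j).1
  set F : L → (L → Finset σ) → ℕ := fun i R => ((A i \ R i).offDiag.filter
      (fun q => 0 < eval (φ q.1) (w (u R)) * eval (φ q.2) (w (u R)))).card with hF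
  have hFi : ∀ i, 2 * (c + 1) * ∑ R ∈ Fintype.piFinset X, F i R
      ≤ (c + 2) * (A i).offDiag.card * (Fintype.piFinset X).card := by
    intro i
    rcases le_or_gt (A i).card c with hle | hlt
    · have : ∑ R ∈ Fintype.piFinset X, F i R = 0 := by
        apply Finset.sum_eq_zero
        intro R hR
        have h1 := hRA R hR i
        rw [min_eq_right hle] at h1
        have h2 : R i = A i := Finset.eq_of_subset_of_card_le h1.1 h1.2.ge
        simp [hF, h2]
      rw [this]; simp
    · have hmin : min c (A i).card = c := min_eq_left hlt.le
      have hXi : 0 < (X i).card := by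
        rw [hX, Finset.card_powersetCard]
        exact Nat.choose_pos (min_le_right _ _)
      refine Nat.le_of_mul_le_mul_left ?_ hXi
      calc (X i).card * (2 * (c + 1) * ∑ R ∈ Fintype.piFinset X, F i R)
          = 2 * (c + 1) * ((X i).card * ∑ R ∈ Fintype.piFinset X, F i R) := by ring
        _ = ∑ R ∈ Fintype.piFinset X, 2 * (c + 1) * ∑ Q ∈ X i, F i (Function.update R i Q) := by
          rw [sum_piFinset_update, Finset.mul_sum]
        _ ≤ ∑ R ∈ Fintype.piFinset X, (c + 2) * (A i).offDiag.card * (X i).card := by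
          apply Finset.sum_le_sum
          intro R hR
          set Rest := (Finset.univ.erase i).biUnion R with hRest
          have hur : ∀ Q, u (Function.update R i Q) = Rest ∪ Q := by
            intro Q
            ext x
            simp only [hu, hRest, Finset.mem_biUnion, Finset.mem_union, Finset.mem_univ, true_and,
              Finset.mem_erase, and_true]
            constructor
            · rintro ⟨j, hj⟩
              by_cases h : j = i
              · subst h; right; simpa using hj
              · left; exact ⟨j, h, by simpa [Function.update_of_ne h] using hj⟩
            · rintro (⟨j, h, hj⟩ | h)
              · exact ⟨j, by simpa [Function.update_of_ne h] using hj⟩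
              · exact ⟨i, by simpa using h⟩
          have hdis : Disjoint Rest (A i) := by
            rw [hRest, Finset.disjoint_biUnion_left]
            intro j hj
            exact (hAd j i (Finset.ne_of_mem_erase hj)).mono_left (hRA R hR j).1
          have hRestS : Rest ⊆ S := by
            intro x hx
            simp only [hRest, Finset.mem_biUnion] at hx
            obtain ⟨j, _, hj⟩ := hx
            exact hAS j ((hRA R hR j).1 hj)
          have hcard : Rest.card + c + 1 = m := by
            have h1 := hucard R hR
            have h2 := hur (R i)
            rw [Function.update_eq_self] at h2
            rw [h2, Finset.card_union_of_disjoint (hdis.mono_right (hRA R hR i).1),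
              (hRA R hR i).2, hmin] at h1
            exact h1
          have hca := class_average (V m) m hfr φ S w hw Rest (A i) hRestS (hAS i) hdis c hcard
          simp only [hF, hur, Function.update_self]
          simp only [hX, hmin]
          exact hca
        _ = (X i).card * ((c + 2) * (A i).offDiag.card * (Fintype.piFinset X).card) := by
          rw [Finset.sum_const, smul_eq_mul]; ring
  have hne : (Fintype.piFinset X).Nonempty := by
    rw [Fintype.piFinset_nonempty]
    intro i
    rw [hX, Finset.powersetCard_nonempty]
    exact min_le_right _ _
  have hpairs : ∑ i, (A i).offDiag.card = (S.offDiag.filter (fun q => l q.1 = l q.2)).card := by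
    rw [Finset.card_eq_sum_card_fiberwise (f := fun q => l q.1) (t := Finset.univ) (by simp)]
    refine Finset.sum_congr rfl fun i _ => congrArg _ ?_
    ext ⟨x, y⟩
    simp only [hA, Finset.mem_offDiag, Finset.mem_filter]
    constructor
    · rintro ⟨⟨h1, rfl⟩, ⟨h2, h3⟩, h4⟩
      exact ⟨⟨⟨h1, h2, h4⟩, h3.symm⟩, rfl⟩
    · rintro ⟨⟨⟨h1, h2, h4⟩, h3⟩, rfl⟩
      exact ⟨⟨h1, rfl⟩, ⟨h2, h3.symm⟩, h4⟩
  obtain ⟨R, hR, hRle⟩ : ∃ R ∈ Fintype.piFinset X, 2 * (c + 1) * ∑ i, F i R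
      ≤ (c + 2) * (S.offDiag.filter (fun q => l q.1 = l q.2)).card := by
    apply Finset.exists_le_of_sum_le hne
    rw [← Finset.mul_sum, Finset.sum_comm, Finset.mul_sum, Finset.sum_const, smul_eq_mul, ← hpairs,
      Finset.mul_sum, Finset.mul_sum]
    refine Finset.sum_le_sum fun i _ => (hFi i).trans (le_of_eq (by ring))
  obtain ⟨hg1, hg2, hg3⟩ := hw (u R) (huS R hR) (hucard R hR)
  refine ⟨S \ u R, w (u R), Finset.sdiff_subset, ?_, ⟨N, by omega, hdeg _ hg1⟩, ?_, ?_⟩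
  · have h1 := hucard R hR
    have : S \ (S \ u R) ⊆ u R := by
      intro x hx; simp only [Finset.mem_sdiff] at hx; tauto
    have := Finset.card_le_card this
    omega
  · intro s hs
    rw [Finset.mem_sdiff] at hs
    exact hg3 s hs.1 hs.2
  · refine le_trans (Nat.mul_le_mul le_rfl ?_) hRle
    rw [Finset.card_eq_sum_card_fiberwise (f := fun q => l q.1) (t := Finset.univ) (by simp)]
    refine Finset.sum_le_sum fun i _ => Finset.card_le_card ?_
    rintro ⟨x, y⟩ hz
    simp only [Finset.mem_filter, Finset.mem_offDiag, Finset.mem_sdiff] at hz ⊢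
    obtain ⟨⟨⟨⟨hx, hxu⟩, ⟨hy, hyu⟩, hxy⟩, hl, hpos⟩, rfl⟩ := hz
    have hnot : ∀ z, z ∉ u R → ∀ i, z ∉ R i := by
      intro z hz i hi
      exact hz (by rw [hu]; exact Finset.mem_biUnion.2 ⟨i, Finset.mem_univ _, hi⟩)
    refine ⟨⟨⟨?_, hnot x hxu _⟩, ⟨?_, hnot y hyu _⟩, hxy⟩, hpos⟩
    · simp [hA, hx]
    · simp [hA, hy, hl]

lemma Gen.mono {n : ℕ} {σ : Type*} {V : ℕ → Submodule ℝ (MvPolynomial (Fin n) ℝ)} {M0 : ℕ}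
    {φ : σ → Fin n → ℝ} {S S' : Finset σ} (h : Gen V M0 φ S) (hS : S' ⊆ S) : Gen V M0 φ S' :=
  fun m hm hmM R hR => h m hm hmM R (hR.trans hS)

lemma sign_const {n : ℕ} (K : Set (Fin n → ℝ)) (hK : IsPreconnected K) (g : MvPolynomial (Fin n) ℝ)
    (hg : ∀ x ∈ K, eval x g ≠ 0) (x y : Fin n → ℝ) (hx : x ∈ K) (hy : y ∈ K)
    (hpos : 0 < eval x g) : 0 < eval y g := by
  by_contra hcon
  push Not at hcon
  obtain ⟨z, hz, hz0⟩ := hK.intermediate_value hy hx (MvPolynomial.continuous_eval g).continuousOn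
    (⟨hcon, hpos.le⟩ : (0 : ℝ) ∈ Icc (eval y g) (eval x g))
  exact hg z hz hz0

lemma comp_mul {n : ℕ} (G g : MvPolynomial (Fin n) ℝ) (x y : Fin n → ℝ)
    (hx : eval x (G * g) ≠ 0) (hy : eval y (G * g) ≠ 0)
    (h : connectedComponentIn {x | eval x (G * g) ≠ 0} x
      = connectedComponentIn {x | eval x (G * g) ≠ 0} y) :
    connectedComponentIn {x | eval x G ≠ 0} x = connectedComponentIn {x | eval x G ≠ 0} y ∧
      (0 < eval x g ↔ 0 < eval y g) := by
  set K := connectedComponentIn {x | eval x (G * g) ≠ 0} x with hK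
  have hxK : x ∈ K := mem_connectedComponentIn hx
  have hyK : y ∈ K := by rw [h]; exact mem_connectedComponentIn hy
  have hKp : IsPreconnected K := isPreconnected_connectedComponentIn
  have hKs : K ⊆ {x | eval x (G * g) ≠ 0} := connectedComponentIn_subset _ _
  have hKG : ∀ z ∈ K, eval z G ≠ 0 ∧ eval z g ≠ 0 := by
    intro z hz
    have : eval z (G * g) ≠ 0 := hKs hz
    rw [map_mul] at this
    exact mul_ne_zero_iff.1 this
  refine ⟨connectedComponentIn_eq (hKp.subset_connectedComponentIn hxK (fun z hz => (hKG z hz).1) hyK), ?_⟩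
  exact ⟨sign_const K hKp g (fun z hz => (hKG z hz).2) x y hxK hyK,
    sign_const K hKp g (fun z hz => (hKG z hz).2) y x hyK hxK⟩

lemma ham_iter {n : ℕ} {σ : Type*} [DecidableEq σ]
    (V : ℕ → Submodule ℝ (MvPolynomial (Fin n) ℝ))
    (hV : ∀ m, 0 < m → Module.Finite ℝ (V m) ∧ Module.finrank ℝ (V m) = m ∧
      ∃ N : ℕ, N ^ n < m ∧ ∀ g ∈ V m, g.totalDegree ≤ n * N) (M0 : ℕ)
    (φ : σ → Fin n → ℝ) (S : Finset σ) (hgen : Gen V M0 φ S) (hM0 : S.card + 1 ≤ M0)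
    (c : ℕ → ℕ) (d : ℕ → ℝ) (hd : ∀ i N : ℕ, N ^ n ≤ c i * 2 ^ i → (N : ℝ) ≤ d i) (j : ℕ) :
    ∃ (S' : Finset σ) (G : MvPolynomial (Fin n) ℝ) (L : Type) (_ : Fintype L) (_ : DecidableEq L)
      (l : σ → L), Fintype.card L = 2 ^ j ∧ S' ⊆ S ∧
      (S \ S').card ≤ ∑ i ∈ Finset.range j, c i * 2 ^ i ∧
      (G.totalDegree : ℝ) ≤ ∑ i ∈ Finset.range j, n * d i ∧
      (∀ s ∈ S', eval (φ s) G ≠ 0) ∧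
      (∀ s ∈ S', ∀ t ∈ S', connectedComponentIn {x | eval x G ≠ 0} (φ s)
        = connectedComponentIn {x | eval x G ≠ 0} (φ t) → l s = l t) ∧
      ((S'.offDiag.filter (fun q => l q.1 = l q.2)).card : ℝ) ≤
        (S.card : ℝ) ^ 2 * ∏ i ∈ Finset.range j, ((c i + 2 : ℝ) / (2 * (c i + 1))) := by
  induction j with
  | zero =>
    refine ⟨S, 1, Unit, inferInstance, inferInstance, fun _ => (), ?_, subset_rfl, ?_, ?_, ?_, ?_, ?_⟩
    · simp
    · simp
    · simp
    · simp
    · simp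
    · simp only [Finset.range_zero, Finset.prod_empty, mul_one, Finset.filter_true]
      rw [Finset.offDiag_card]
      have : S.card * S.card - S.card ≤ S.card ^ 2 := by rw [sq]; omega
      exact_mod_cast this
  | succ j ih =>
    obtain ⟨S1, G, L, _, _, l, hL, hS1, htr, hdeg, hG, hl, hp⟩ := ih
    have hc1 := Finset.card_le_card hS1
    obtain ⟨S2, g, hS2, htr2, ⟨N, hN, hdeg2⟩, hg, hp2⟩ := ham_step V hV M0 φ S1 (hgen.mono hS1)
      (by omega) l (c j)
    rw [hL] at htr2 hN
    refine ⟨S2, G * g, L × Bool, inferInstance, inferInstance,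
      fun s => (l s, decide (0 < eval (φ s) g)), ?_, hS2.trans hS1, ?_, ?_, ?_, ?_, ?_⟩
    · simp [hL, pow_succ]
    · rw [Finset.sum_range_succ]
      have : S \ S2 ⊆ (S \ S1) ∪ (S1 \ S2) := by
        intro x hx; simp only [Finset.mem_union, Finset.mem_sdiff] at hx ⊢; tauto
      have := (Finset.card_le_card this).trans (Finset.card_union_le _ _)
      omega
    · rw [Finset.sum_range_succ]
      have h1 : ((G * g).totalDegree : ℝ) ≤ G.totalDegree + g.totalDegree := by
        exact_mod_cast totalDegree_mul G g
      have h2 : (g.totalDegree : ℝ) ≤ n * N := by exact_mod_cast hdeg2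
      have h3 : (n : ℝ) * N ≤ n * d j := mul_le_mul_of_nonneg_left (hd j N hN) (by positivity)
      linarith
    · intro s hs
      rw [map_mul]
      exact mul_ne_zero (hG s (hS2 hs)) (hg s hs)
    · intro s hs t ht h
      have hs' : eval (φ s) (G * g) ≠ 0 := by
        rw [map_mul]; exact mul_ne_zero (hG s (hS2 hs)) (hg s hs)
      have ht' : eval (φ t) (G * g) ≠ 0 := by
        rw [map_mul]; exact mul_ne_zero (hG t (hS2 ht)) (hg t ht)
      obtain ⟨h1, h2⟩ := comp_mul G g _ _ hs' ht' h
      have h3 := hl s (hS2 hs) t (hS2 ht) h1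
      simp only [Prod.mk.injEq, h3, true_and]
      exact decide_eq_decide.2 h2
    · rw [Finset.prod_range_succ]
      have hle : (S2.offDiag.filter (fun q => (l q.1, decide (0 < eval (φ q.1) g))
          = (l q.2, decide (0 < eval (φ q.2) g)))).card ≤ (S2.offDiag.filter (fun q => l q.1 = l q.2 ∧
          0 < eval (φ q.1) g * eval (φ q.2) g)).card := by
        apply Finset.card_le_card
        rintro ⟨x, y⟩ hz
        simp only [Finset.mem_filter, Finset.mem_offDiag, Prod.mk.injEq, decide_eq_decide] at hz ⊢
        obtain ⟨⟨hx, hy, hxy⟩, h1, h2⟩ := hz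
        refine ⟨⟨hx, hy, hxy⟩, h1, ?_⟩
        have hx0 := hg x hx
        have hy0 := hg y hy
        rcases lt_or_gt_of_ne hx0 with h | h
        · have : ¬ 0 < eval (φ y) g := fun h' => absurd (h2.2 h') (by linarith)
          have : eval (φ y) g < 0 := lt_of_le_of_ne (by linarith) hy0
          exact mul_pos_of_neg_of_neg h this
        · exact mul_pos h (h2.1 h)
      have h1 : (2 * (c j + 1) : ℝ) * ((S2.offDiag.filter (fun q => (l q.1, decide (0 < eval (φ q.1) g))
          = (l q.2, decide (0 < eval (φ q.2) g)))).card : ℝ) ≤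
          (c j + 2) * ((S1.offDiag.filter (fun q => l q.1 = l q.2)).card : ℝ) := by
        exact_mod_cast (Nat.mul_le_mul le_rfl hle).trans hp2
      have h2 : (0 : ℝ) < 2 * (c j + 1) := by positivity
      calc _ ≤ (c j + 2) * ((S1.offDiag.filter (fun q => l q.1 = l q.2)).card : ℝ) / (2 * (c j + 1)) := by
            rw [le_div_iff₀ h2, mul_comm]; exact h1
        _ = ((S1.offDiag.filter (fun q => l q.1 = l q.2)).card : ℝ) * ((c j + 2 : ℝ) / (2 * (c j + 1))) := by
            ring
        _ ≤ _ := by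
            rw [← mul_assoc]
            exact mul_le_mul_of_nonneg_right hp (by positivity)

lemma prod_bound (J : ℕ) (c : ℕ → ℕ) (hc : ∀ i < J, (3 / 2 : ℝ) ^ (J - 1 - i) ≤ c i) :
    ∏ i ∈ Finset.range J, ((c i + 2 : ℝ) / (2 * (c i + 1))) ≤ 32 / 2 ^ J := by
  have h1 : ∏ i ∈ Finset.range J, ((c i + 2 : ℝ) / (2 * (c i + 1)))
      ≤ ∏ i ∈ Finset.range J, (Real.exp ((2 / 3 : ℝ) ^ (J - 1 - i)) * (1 / 2)) := by
    apply Finset.prod_le_prod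
    · intro i _; positivity
    · intro i hi
      have h := hc i (Finset.mem_range.1 hi)
      have hp : (0 : ℝ) < (3 / 2 : ℝ) ^ (J - 1 - i) := by positivity
      have e : (2 / 3 : ℝ) ^ (J - 1 - i) = ((3 / 2 : ℝ) ^ (J - 1 - i))⁻¹ := by
        rw [← inv_pow]; norm_num
      have h2 := Real.add_one_le_exp ((2 / 3 : ℝ) ^ (J - 1 - i))
      have h3 : (1 : ℝ) / (c i + 1) ≤ (2 / 3 : ℝ) ^ (J - 1 - i) := by
        rw [e, one_div]
        apply inv_anti₀ hp; linarith
      have h4 : ((c i + 2 : ℝ) / (2 * (c i + 1))) = (1 / (c i + 1) + 1) * (1 / 2) := by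
        field_simp; ring
      rw [h4]
      have : (1 : ℝ) / (c i + 1) + 1 ≤ Real.exp ((2 / 3 : ℝ) ^ (J - 1 - i)) := by linarith
      linarith
  refine h1.trans ?_
  rw [Finset.prod_mul_distrib, ← Real.exp_sum, Finset.prod_const, Finset.card_range,
    Finset.sum_range_reflect (fun i => (2 / 3 : ℝ) ^ i) J]
  have h2 : ∑ i ∈ Finset.range J, (2 / 3 : ℝ) ^ i ≤ 3 := by
    rw [geom_sum_eq (by norm_num)]
    have : (0 : ℝ) ≤ (2 / 3) ^ J := by positivity
    rw [div_le_iff_of_neg (by norm_num)]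
    linarith
  have h3 : Real.exp 3 ≤ 32 := by
    have := Real.exp_one_lt_d9
    have e : Real.exp 3 = Real.exp 1 ^ 3 := by rw [← Real.exp_nat_mul]; norm_num
    rw [e]
    calc Real.exp 1 ^ 3 ≤ 2.7182818286 ^ 3 := by gcongr
      _ ≤ 32 := by norm_num
  have h4 := (Real.exp_le_exp.2 h2).trans h3
  rw [one_div, inv_pow, div_eq_mul_inv]
  exact mul_le_mul_of_nonneg_right h4 (by positivity)

/-- The partitioning result. -/
lemma partition_exists (n : ℕ) (hn : 0 < n) : ∃ C : ℝ, 0 < C ∧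
    ∀ {σ : Type} [DecidableEq σ] (V : ℕ → Submodule ℝ (MvPolynomial (Fin n) ℝ))
    (_hV : ∀ m, 0 < m → Module.Finite ℝ (V m) ∧ Module.finrank ℝ (V m) = m ∧
      ∃ N : ℕ, N ^ n < m ∧ ∀ g ∈ V m, g.totalDegree ≤ n * N) (M0 : ℕ)
    (φ : σ → Fin n → ℝ) (S : Finset σ) (_hgen : Gen V M0 φ S) (_hM0 : S.card + 1 ≤ M0) (J : ℕ),
    ∃ (S' : Finset σ) (G : MvPolynomial (Fin n) ℝ), S' ⊆ S ∧
      ((S \ S').card : ℝ) ≤ 8 * 2 ^ J ∧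
      (G.totalDegree : ℝ) ≤ C * (2 : ℝ) ^ ((J : ℝ) / n) ∧
      (∀ s ∈ S', eval (φ s) G ≠ 0) ∧
      (∀ Q : Finset (σ × σ), (∀ q ∈ Q, q.1 ∈ S' ∧ q.2 ∈ S' ∧ q.1 ≠ q.2 ∧
        connectedComponentIn {x | eval x G ≠ 0} (φ q.1)
        = connectedComponentIn {x | eval x G ≠ 0} (φ q.2)) →
          (Q.card : ℝ) ≤ 32 * (S.card : ℝ) ^ 2 / 2 ^ J) := by
  have hn' : (0 : ℝ) < n := by exact_mod_cast hn
  set q : ℝ := (3 / 4 : ℝ) ^ ((1 : ℝ) / n) with hq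
  have hq0 : 0 < q := by positivity
  have hq1 : q < 1 := Real.rpow_lt_one (by norm_num) (by norm_num) (by positivity)
  refine ⟨n * (1 / (1 - q)), by have : 0 < 1 - q := by linarith
                                positivity, ?_⟩
  intro σ _ V hV M0 φ S hgen hM0 J
  set c : ℕ → ℕ := fun i => ⌈(3 / 2 : ℝ) ^ (J - 1 - i)⌉₊ with hc
  have hcub : ∀ i, (c i : ℝ) ≤ 2 * (3 / 2 : ℝ) ^ (J - 1 - i) := by
    intro i
    have h1 := Nat.ceil_lt_add_one (a := (3 / 2 : ℝ) ^ (J - 1 - i)) (by positivity)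
    have h2 : (1 : ℝ) ≤ (3 / 2 : ℝ) ^ (J - 1 - i) := one_le_pow₀ (by norm_num)
    simp only [hc]; linarith
  have hc2 : ∀ i < J, (c i : ℝ) * 2 ^ i ≤ (3 / 4) ^ (J - 1 - i) * 2 ^ J := by
    intro i hi
    have e1 : (2 : ℝ) ^ J = 2 * 2 ^ (J - 1 - i) * 2 ^ i := by
      rw [mul_comm 2, ← pow_succ, ← pow_add]; congr 1; omega
    calc (c i : ℝ) * 2 ^ i ≤ (2 * (3 / 2 : ℝ) ^ (J - 1 - i)) * 2 ^ i := by
          gcongr; exact hcub i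
      _ = (3 / 4) ^ (J - 1 - i) * 2 ^ J := by
          rw [e1]
          have : (3 / 2 : ℝ) ^ (J - 1 - i) = (3 / 4) ^ (J - 1 - i) * 2 ^ (J - 1 - i) := by
            rw [← mul_pow]; norm_num
          rw [this]; ring
  set d : ℕ → ℝ := fun i => ((c i : ℝ) * 2 ^ i) ^ ((1 : ℝ) / n) with hd
  have hd' : ∀ i N : ℕ, N ^ n ≤ c i * 2 ^ i → (N : ℝ) ≤ d i := by
    intro i N h
    have h1 : (N : ℝ) ^ n ≤ (c i : ℝ) * 2 ^ i := by exact_mod_cast h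
    have h2 := Real.rpow_le_rpow (by positivity) h1 (by positivity : (0 : ℝ) ≤ 1 / n)
    rwa [one_div, Real.pow_rpow_inv_natCast (by positivity) hn.ne', ← one_div] at h2
  obtain ⟨S', G, L, _, _, l, hL, hS', htr, hdeg, hG, hl, hp⟩ := ham_iter V hV M0 φ S hgen hM0 c d hd' J
  refine ⟨S', G, hS', ?_, ?_, hG, ?_⟩
  · have h1 : ((S \ S').card : ℝ) ≤ ∑ i ∈ Finset.range J, (c i : ℝ) * 2 ^ i := by exact_mod_cast htr
    have h2 : ∑ i ∈ Finset.range J, (c i : ℝ) * 2 ^ i ≤ ∑ i ∈ Finset.range J, (3 / 4 : ℝ) ^ (J - 1 - i) * 2 ^ J :=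
      Finset.sum_le_sum fun i hi => hc2 i (Finset.mem_range.1 hi)
    rw [← Finset.sum_mul, Finset.sum_range_reflect (fun i => (3 / 4 : ℝ) ^ i) J, geom_sum_eq (by norm_num)] at h2
    have h3 : (0 : ℝ) ≤ (3 / 4) ^ J := by positivity
    have h4 : (0 : ℝ) < 2 ^ J := by positivity
    have h5 : ((3 / 4 : ℝ) ^ J - 1) / (3 / 4 - 1) ≤ 8 := by
      rw [div_le_iff_of_neg (by norm_num)]
      linarith
    calc _ ≤ _ := h1.trans h2
      _ ≤ _ := by gcongr
  · refine hdeg.trans ?_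
    have h1 : ∀ i ∈ Finset.range J, (n : ℝ) * d i ≤ n * (q ^ (J - 1 - i) * (2 : ℝ) ^ ((J : ℝ) / n)) := by
      intro i hi
      apply mul_le_mul_of_nonneg_left _ hn'.le
      have h2 := Real.rpow_le_rpow (by positivity) (hc2 i (Finset.mem_range.1 hi)) (by positivity : (0 : ℝ) ≤ 1 / n)
      refine h2.trans (le_of_eq ?_)
      rw [Real.mul_rpow (by positivity) (by positivity), hq, ← Real.rpow_natCast, ← Real.rpow_natCast,
        ← Real.rpow_natCast, ← Real.rpow_mul (by norm_num), ← Real.rpow_mul (by norm_num),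
        ← Real.rpow_mul (by norm_num)]
      congr 2 <;> ring
    refine (Finset.sum_le_sum h1).trans ?_
    rw [← Finset.mul_sum, ← Finset.sum_mul, Finset.sum_range_reflect (fun i => q ^ i) J, mul_assoc]
    have h2 : ∑ i ∈ Finset.range J, q ^ i ≤ 1 / (1 - q) := by
      rw [geom_sum_eq hq1.ne, ← neg_div_neg_eq]
      have : 0 < q ^ J := by positivity
      apply div_le_div₀ <;> linarith
    gcongr
  · intro Q hQ
    have h1 : Q ⊆ S'.offDiag.filter (fun q => l q.1 = l q.2) := by
      rintro ⟨x, y⟩ hz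
      obtain ⟨hx, hy, hxy, h⟩ := hQ _ hz
      simp only [Finset.mem_filter, Finset.mem_offDiag]
      exact ⟨⟨hx, hy, hxy⟩, hl x hx y hy h⟩
    have h2 : (Q.card : ℝ) ≤ _ := (Nat.cast_le.2 (Finset.card_le_card h1)).trans hp
    have h3 := prod_bound J c (fun i _ => Nat.le_ceil _)
    calc _ ≤ _ := h2
      _ ≤ (S.card : ℝ) ^ 2 * (32 / 2 ^ J) := by gcongr
      _ = _ := by ring

/-- Incidence count for an abstract relation. -/
def incE {σ τ : Type*} (E : σ → τ → Prop) (A : Finset σ) (X : Finset τ) : ℕ :=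
  open Classical in ∑ t ∈ X, (A.filter fun s => E s t).card

lemma le_add_choose (k d : ℕ) (hk : 0 < k) : d ≤ k + d.choose k := by
  rcases le_or_gt d k with h | h
  · omega
  obtain ⟨e, rfl⟩ := Nat.exists_eq_add_of_lt h
  obtain ⟨k', rfl⟩ := Nat.exists_eq_succ_of_ne_zero hk.ne'
  have key : ∀ e, e ≤ (k' + 1 + e).choose (k' + 1) := by
    intro e
    induction e with
    | zero => simp
    | succ e ih =>
      rw [show k' + 1 + (e + 1) = (k' + 1 + e) + 1 from rfl, Nat.choose_succ_succ']
      have : 0 < (k' + 1 + e).choose k' := Nat.choose_pos (by omega)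
      omega
  have := key (e + 1)
  simp only [Nat.succ_eq_add_one] at *
  have e1 : k' + 1 + e + 1 = k' + 1 + (e + 1) := by omega
  rw [e1]
  omega

lemma kst {σ τ : Type*} (E : σ → τ → Prop) (S : Finset σ) (T : Finset τ) (k b : ℕ) (hk : 0 < k)
    (hfree : KBFree E S T k b) (A : Finset σ) (hA : A ⊆ S) (X : Finset τ) (hX : X ⊆ T) :
    incE E A X ≤ k * X.card + b * A.card ^ k := by
  classical
  have h1 : incE E A X ≤ ∑ t ∈ X, (k + ((A.filter fun s => E s t).powersetCard k).card) := by
    refine Finset.sum_le_sum fun t _ => ?_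
    rw [Finset.card_powersetCard]
    exact le_add_choose k _ hk
  have h2 : ∑ t ∈ X, ((A.filter fun s => E s t).powersetCard k).card
      ≤ ∑ P ∈ A.powersetCard k, (X.filter fun t => ∀ s ∈ P, E s t).card := by
    rw [← Finset.card_sigma, ← Finset.card_sigma]
    apply Finset.card_le_card_of_injOn (fun z => ⟨z.2, z.1⟩)
    · rintro ⟨t, P⟩ hz
      simp only [Finset.coe_sigma, Set.mem_sigma_iff, Finset.mem_coe, Finset.mem_powersetCard,
        Finset.mem_filter] at hz ⊢
      refine ⟨⟨hz.2.1.trans (Finset.filter_subset _ _), hz.2.2⟩, hz.1, fun s hs => ?_⟩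
      exact (Finset.mem_filter.1 (hz.2.1 hs)).2
    · rintro ⟨t, P⟩ _ ⟨t', P'⟩ _ h
      simp only [Sigma.mk.injEq, heq_eq_eq] at h ⊢
      exact ⟨h.2, h.1⟩
  have h3 : ∀ P ∈ A.powersetCard k, (X.filter fun t => ∀ s ∈ P, E s t).card ≤ b := by
    intro P hP
    rw [Finset.mem_powersetCard] at hP
    by_contra hcon
    push Not at hcon
    obtain ⟨B, hB, hBc⟩ := Finset.exists_subset_card_eq hcon.le
    apply hfree
    refine ⟨P, B, hP.1.trans hA, hB.trans ((Finset.filter_subset _ _).trans hX), hP.2, hBc, ?_⟩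
    intro s hs t ht
    exact (Finset.mem_filter.1 (hB ht)).2 s hs
  have h4 := Finset.sum_le_sum h3
  rw [Finset.sum_const, Finset.card_powersetCard, smul_eq_mul] at h4
  rw [Finset.sum_add_distrib, Finset.sum_const, smul_eq_mul] at h1
  have h5 : A.card.choose k ≤ A.card ^ k := Nat.choose_le_pow _ _
  have h6 := Nat.mul_le_mul_right b h5
  rw [mul_comm X.card] at h1
  rw [mul_comm b]
  omega

lemma full_le {σ τ : Type*} (E : σ → τ → Prop) (S : Finset σ) (T : Finset τ) (k b : ℕ)
    (hfree : KBFree E S T k b) (A : Finset σ) (hA : A ⊆ S) (hk : k ≤ A.card) (X : Finset τ) (hX : X ⊆ T)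
    (hE : ∀ t ∈ X, ∀ s ∈ A, E s t) : X.card ≤ b := by
  by_contra hcon
  push Not at hcon
  obtain ⟨B, hB, hBc⟩ := Finset.exists_subset_card_eq hcon.le
  obtain ⟨P, hP, hPc⟩ := Finset.exists_subset_card_eq hk
  exact hfree ⟨P, B, hP.trans hA, hB.trans hX, hPc, hBc, fun s hs t ht => hE t (hB ht) s (hP hs)⟩

lemma comp_dvd {n : ℕ} (H g : MvPolynomial (Fin n) ℝ) (hd : g ∣ H) (x y : Fin n → ℝ)
    (hx : eval x H ≠ 0) (hy : eval y H ≠ 0)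
    (h : connectedComponentIn {x | eval x H ≠ 0} x
      = connectedComponentIn {x | eval x H ≠ 0} y) :
    connectedComponentIn {x | eval x g ≠ 0} x = connectedComponentIn {x | eval x g ≠ 0} y ∧
      (0 < eval x g ↔ 0 < eval y g) := by
  obtain ⟨G, rfl⟩ := hd
  refine ⟨(comp_mul g G x y hx hy h).1, ?_⟩
  rw [mul_comm g G] at hx hy h
  exact (comp_mul G g x y hx hy h).2

lemma card_cells_le {n : ℕ} {σ : Type*} [DecidableEq (Set (Fin n → ℝ))] (φ : σ → Fin n → ℝ) (S : Finset σ)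
    (G : MvPolynomial (Fin n) ℝ) (hG : ∀ s ∈ S, eval (φ s) G ≠ 0) :
    (S.image (fun s => connectedComponentIn {x | eval x G ≠ 0} (φ s))).card
      ≤ (n * (2 * G.totalDegree + 2) + 1) ^ n := by
  classical
  set κ := fun s => connectedComponentIn {x | eval x G ≠ 0} (φ s) with hκ
  have hrep : ∀ c : Set (Fin n → ℝ), ∃ x : Fin n → ℝ, c ∈ S.image κ →
      eval x G ≠ 0 ∧ connectedComponentIn {x | eval x G ≠ 0} x = c := by
    intro c
    by_cases hc : c ∈ S.image κ
    · obtain ⟨s, hs, rfl⟩ := Finset.mem_image.1 hc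
      exact ⟨φ s, fun _ => ⟨hG s hs, rfl⟩⟩
    · exact ⟨0, fun h => absurd h hc⟩
  choose r hr using hrep
  have hcard : (S.image κ).card = ((S.image κ).image r).card := by
    refine (Finset.card_image_of_injOn ?_).symm
    intro c hc c' hc' h
    rw [← (hr c hc).2, ← (hr c' hc').2, h]
  rw [hcard]
  apply card_components_le G le_rfl
  · intro z hz
    obtain ⟨c, hc, rfl⟩ := Finset.mem_image.1 hz
    exact (hr c hc).1
  · intro z hz z' hz' h
    obtain ⟨c, hc, rfl⟩ := Finset.mem_image.1 hz
    obtain ⟨c', hc', rfl⟩ := Finset.mem_image.1 hz'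
    rw [(hr c hc).2, (hr c' hc').2] at h
    rw [h]

lemma crossing_le {n : ℕ} (G f : MvPolynomial (Fin n) ℝ) (q : ℕ) (Xs : Finset (Set (Fin n → ℝ)))
    (hX : ∀ c ∈ Xs, ∃ x y, x ∈ c ∧ y ∈ c ∧ eval x G ≠ 0 ∧
      c = connectedComponentIn {x | eval x G ≠ 0} x ∧ eval x f < 1 ∧ 2 < eval y f) :
    Xs.card * q ≤ (n * (2 * (G.totalDegree + q * f.totalDegree) + 2) + 1) ^ n := by
  classical
  set v : ℕ → ℝ := fun i => 1 + (2 * i + 1) / (2 * q + 2) with hv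
  set θ : ℕ → ℝ := fun i => 1 + (2 * i + 2) / (2 * q + 2) with hθ
  have hq : (0 : ℝ) < 2 * q + 2 := by positivity
  have hvθ : ∀ i j, v i ≠ θ j := by
    intro i j h
    simp only [hv, hθ, add_right_inj] at h
    rw [div_left_inj' hq.ne'] at h
    have : 2 * i + 1 = 2 * j + 2 := by exact_mod_cast h
    omega
  set H := G * ∏ i ∈ Finset.range q, (f - C (θ i)) with hH
  have hz : ∀ p : Set (Fin n → ℝ) × ℕ, ∃ z : Fin n → ℝ, p ∈ Xs ×ˢ Finset.range q →
      eval z f = v p.2 ∧ eval z H ≠ 0 ∧ connectedComponentIn {x | eval x G ≠ 0} z = p.1 := by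
    rintro ⟨c, i⟩
    by_cases hp : (c, i) ∈ Xs ×ˢ Finset.range q
    swap
    · exact ⟨0, fun h => absurd h hp⟩
    have hp' := hp
    rw [Finset.mem_product, Finset.mem_range] at hp'
    obtain ⟨x, y, hx, hy, hxG, hc, h1, h2⟩ := hX c hp'.1
    have hiq : (i : ℝ) + 1 ≤ q := by exact_mod_cast hp'.2
    have hv1 : 1 ≤ v i := by
      simp only [hv]
      have : (0 : ℝ) ≤ (2 * i + 1) / (2 * q + 2) := by positivity
      linarith
    have hv2 : v i ≤ 2 := by
      simp only [hv]
      have : (2 * i + 1 : ℝ) / (2 * q + 2) ≤ 1 := by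
        rw [div_le_one hq]; linarith
      linarith
    have hcp : IsPreconnected c := by rw [hc]; exact isPreconnected_connectedComponentIn
    obtain ⟨z, hzc, hzv⟩ := hcp.intermediate_value hx hy (MvPolynomial.continuous_eval f).continuousOn
      (⟨by linarith, by linarith⟩ : v i ∈ Icc (eval x f) (eval y f))
    have hzc' : z ∈ connectedComponentIn {x | eval x G ≠ 0} x := hc ▸ hzc
    refine ⟨z, fun _ => ⟨hzv, ?_, ?_⟩⟩
    · rw [hH, map_mul, map_prod]
      refine mul_ne_zero (connectedComponentIn_subset _ _ hzc') (Finset.prod_ne_zero_iff.2 fun j _ => ?_)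
      have hzv' : eval z f = v i := hzv
      rw [map_sub, eval_C, hzv']
      exact sub_ne_zero.2 (hvθ i j)
    · rw [← connectedComponentIn_eq hzc', ← hc]
  choose z hz using hz
  have key : ∀ p ∈ Xs ×ˢ Finset.range q, ∀ p' ∈ Xs ×ˢ Finset.range q,
      connectedComponentIn {x | eval x H ≠ 0} (z p) = connectedComponentIn {x | eval x H ≠ 0} (z p') →
      p = p' := by
    rintro ⟨c, i⟩ hp ⟨c', j⟩ hp' h
    obtain ⟨h1, h2, h3⟩ := hz _ hp
    obtain ⟨h1', h2', h3'⟩ := hz _ hp'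
    have hcc : c = c' := by
      have := (comp_dvd H G ⟨_, rfl⟩ _ _ h2 h2' h).1
      rw [h3, h3'] at this
      exact this
    have hdv : ∀ i ∈ Finset.range q, (f - C (θ i)) ∣ H := fun i hi =>
      (Finset.dvd_prod_of_mem (fun i => f - C (θ i)) hi).mul_left G
    have haux : ∀ i j : ℕ, i < j → v i < θ i ∧ θ i < v j := by
      intro i j hij
      have : (i : ℝ) + 1 ≤ j := by exact_mod_cast hij
      simp only [hv, hθ, add_lt_add_iff_left]
      constructor
      · exact div_lt_div_of_pos_right (by linarith) hq
      · exact div_lt_div_of_pos_right (by linarith) hq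
    rw [Finset.mem_product] at hp hp'
    simp only at h1 h1'
    rcases lt_trichotomy i j with hij | hij | hij
    · exfalso
      have := (comp_dvd H _ (hdv i hp.2) _ _ h2 h2' h).2
      rw [map_sub, map_sub, eval_C, eval_C, h1, h1'] at this
      have h4 := haux i j hij
      have := this.2 (by linarith)
      linarith
    · rw [hcc, hij]
    · exfalso
      have := (comp_dvd H _ (hdv j hp'.2) _ _ h2 h2' h).2
      rw [map_sub, map_sub, eval_C, eval_C, h1, h1'] at this
      have h4 := haux j i hij
      have := this.1 (by linarith)
      linarith
  have hcard : Xs.card * q = ((Xs ×ˢ Finset.range q).image z).card := by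
    rw [Finset.card_image_of_injOn, Finset.card_product, Finset.card_range]
    intro p hp p' hp' h
    exact key p hp p' hp' (by rw [h])
  rw [hcard]
  apply card_components_le H
  · refine (totalDegree_mul _ _).trans (add_le_add le_rfl ?_)
    refine (totalDegree_finsetProd _ _).trans ?_
    refine (Finset.sum_le_card_nsmul _ _ f.totalDegree fun i _ => ?_).trans (by simp)
    refine (totalDegree_sub _ _).trans (by simp)
  · intro x hx
    obtain ⟨p, hp, rfl⟩ := Finset.mem_image.1 hx
    exact (hz p hp).2.1
  · intro x hx x' hx' h
    obtain ⟨p, hp, rfl⟩ := Finset.mem_image.1 hx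
    obtain ⟨p', hp', rfl⟩ := Finset.mem_image.1 hx'
    rw [key p hp p' hp' h]

lemma heavy_count {σ κT : Type*} [DecidableEq σ] [DecidableEq κT] (κ : σ → κT) (S' Hv : Finset σ) (hH : Hv ⊆ S')
    (a : ℝ) (ha : ∀ x ∈ Hv, a + 1 ≤ ((S'.filter (fun y => κ y = κ x)).card : ℝ)) :
    ∃ Q : Finset (σ × σ), (∀ q ∈ Q, q.1 ∈ S' ∧ q.2 ∈ S' ∧ q.1 ≠ q.2 ∧ κ q.1 = κ q.2) ∧
      (Hv.card : ℝ) * a ≤ Q.card := by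
  refine ⟨(S' ×ˢ S').filter (fun q => q.1 ≠ q.2 ∧ κ q.1 = κ q.2 ∧ q.1 ∈ Hv), ?_, ?_⟩
  · intro q hq
    simp only [Finset.mem_filter, Finset.mem_product] at hq
    tauto
  · rw [Finset.card_eq_sum_card_fiberwise (f := Prod.fst) (t := Hv)
      (by intro q hq; simp only [Finset.coe_filter, Set.mem_ofPred_eq] at hq; exact hq.2.2.2)]
    push_cast
    rw [← nsmul_eq_mul]
    apply Finset.card_nsmul_le_sum
    intro x hx
    have h1 := ha x hx
    have h2 : ((S'.filter (fun y => κ y = κ x)).erase x).card ≤ (Finset.filter (fun q => q.1 = x)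
        ((S' ×ˢ S').filter (fun q : σ × σ => q.1 ≠ q.2 ∧ κ q.1 = κ q.2 ∧ q.1 ∈ Hv))).card := by
      apply Finset.card_le_card_of_injOn (fun y => (x, y))
      · intro y hy
        simp only [Finset.coe_erase, Finset.coe_filter, Set.mem_sdiff, Set.mem_ofPred_eq,
          Set.mem_singleton_iff] at hy
        simp only [Finset.coe_filter, Set.mem_ofPred_eq, Finset.mem_filter, Finset.mem_product]
        exact ⟨⟨⟨hH hx, hy.1.1⟩, fun h => hy.2 h.symm, hy.1.2.symm, hx⟩, trivial⟩
      · intro y _ y' _ h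
        simpa using h
    rw [Finset.card_erase_of_mem (by simp [hH hx])] at h2
    have h3 : (S'.filter (fun y => κ y = κ x)).card ≤ (Finset.filter (fun q => q.1 = x)
        ((S' ×ˢ S').filter (fun q : σ × σ => q.1 ≠ q.2 ∧ κ q.1 = κ q.2 ∧ q.1 ∈ Hv))).card + 1 := by omega
    have h4 : ((S'.filter (fun y => κ y = κ x)).card : ℝ) ≤ ((Finset.filter (fun q => q.1 = x)
        ((S' ×ˢ S').filter (fun q : σ × σ => q.1 ≠ q.2 ∧ κ q.1 = κ q.2 ∧ q.1 ∈ Hv))).card : ℝ) + 1 := by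
      exact_mod_cast h3
    linarith

lemma cell_inc {σ τ : Type*} (E : σ → τ → Prop) (S : Finset σ) (T : Finset τ) (k b : ℕ) (hk : 0 < k)
    (hfree : KBFree E S T k b) (A : Finset σ) (hA : A ⊆ S) (hkA : k ≤ A.card) (X : Finset τ) (hX : X ⊆ T)
    (hXm : ∀ t ∈ T, t ∉ X → (∀ s ∈ A, E s t) ∨ (∀ s ∈ A, ¬ E s t)) :
    incE E A T ≤ k * X.card + b * A.card ^ k + b * A.card := by
  classical
  set F := T.filter (fun t => ∀ s ∈ A, E s t) with hF
  have hFc : F.card ≤ b := full_le E S T k b hfree A hA hkA F (Finset.filter_subset _ _)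
    (fun t ht => (Finset.mem_filter.1 ht).2)
  have h1 : incE E A T ≤ incE E A X + F.card * A.card := by
    have hsub : incE E A T ≤ ∑ t ∈ X ∪ F, (A.filter fun s => E s t).card := by
      unfold incE
      rw [← Finset.sum_subset (Finset.union_subset hX (Finset.filter_subset (fun t => ∀ s ∈ A, E s t) T))]
      intro t ht htn
      rw [Finset.mem_union, not_or] at htn
      rcases hXm t ht htn.1 with h | h
      · exact absurd (Finset.mem_filter.2 ⟨ht, h⟩) htn.2
      · rw [Finset.card_eq_zero, Finset.filter_eq_empty_iff]
        exact fun s hs => h s hs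
    refine hsub.trans ?_
    have h2 : ∑ t ∈ X ∪ F, (A.filter fun s => E s t).card
        ≤ ∑ t ∈ X, (A.filter fun s => E s t).card + ∑ t ∈ F, (A.filter fun s => E s t).card := by
      rw [← Finset.sum_union_inter]; omega
    refine h2.trans (add_le_add le_rfl ?_)
    exact Finset.sum_le_card_nsmul _ _ _ fun t _ => Finset.card_filter_le _ _
  have h2 := kst E S T k b hk hfree A hA X hX
  have h3 := Nat.mul_le_mul_right A.card hFc
  omega

set_option maxHeartbeats 1000000 in
lemma step (n k D b : ℕ) (hn : 0 < n) (hk : 0 < k) : ∃ c1 K : ℝ, 0 < c1 ∧ c1 ≤ 1 ∧ 0 < K ∧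
    ∀ {σ τ : Type} (V : ℕ → Submodule ℝ (MvPolynomial (Fin n) ℝ))
    (_hV : ∀ m, 0 < m → Module.Finite ℝ (V m) ∧ Module.finrank ℝ (V m) = m ∧
      ∃ N : ℕ, N ^ n < m ∧ ∀ g ∈ V m, g.totalDegree ≤ n * N) (M0 : ℕ)
    (φ : σ → Fin n → ℝ) (S : Finset σ) (_hgen : Gen V M0 φ S) (_hM0 : S.card + 1 ≤ M0)
    (T : Finset τ) (E : σ → τ → Prop) (f : τ → MvPolynomial (Fin n) ℝ)
    (_hf : ∀ t ∈ T, (f t).totalDegree ≤ 2 * D)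
    (_hE1 : ∀ s ∈ S, ∀ t ∈ T, E s t → eval (φ s) (f t) < 1)
    (_hE2 : ∀ s ∈ S, ∀ t ∈ T, ¬ E s t → 2 < eval (φ s) (f t))
    (_hfree : KBFree E S T k b) (J : ℕ) (_hJ : (2 : ℝ) ^ J ≤ c1 * S.card),
    ∃ S1 ⊆ S, 2 * S1.card ≤ S.card ∧ ∃ S2 ⊆ S, (∀ x ∈ S, x ∈ S1 ∨ x ∈ S2) ∧ (incE E S2 T : ℝ) ≤
      K * (T.card * (2 ^ J / (2 : ℝ) ^ ((J : ℝ) / n)) + 2 ^ J * ((S.card : ℝ) / 2 ^ J) ^ k + S.card) := by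
  obtain ⟨CP, hCP, hpart⟩ := partition_exists n hn
  set CL : ℝ := (n * (2 * CP + 2) + 1) ^ n with hCL
  set CX : ℝ := (n * (2 * (CP + 4 * D) + 2) + 1) ^ n with hCX
  have hCL0 : 0 < CL := by positivity
  have hCX0 : 0 < CX := by positivity
  have hc1 : (1 : ℝ) / (64 + 8 * k * CL) ≤ 1 / 64 :=
    one_div_le_one_div_of_le (by norm_num) (by have : 0 ≤ 8 * k * CL := by positivity
                                               linarith)
  refine ⟨1 / (64 + 8 * k * CL), k * CX + CL * b * 257 ^ k + b + 1, by positivity, by linarith, by positivity, ?_⟩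
  intro σ τ V hV M0 φ S hgen hM0 T E f hf hE1 hE2 hfree J hJ
  classical
  obtain ⟨S', G, hS', htr, hdeg, hG, hpairs⟩ := hpart V hV M0 φ S hgen hM0 J
  set ρ : ℝ := (2 : ℝ) ^ ((J : ℝ) / n) with hρ
  have hn' : (0 : ℝ) < n := by exact_mod_cast hn
  have hρ1 : 1 ≤ ρ := Real.one_le_rpow (by norm_num) (by positivity)
  have hρ0 : 0 < ρ := by linarith
  have hρn : ρ ^ n = 2 ^ J := by
    rw [hρ, ← Real.rpow_natCast, ← Real.rpow_mul (by norm_num), div_mul_cancel₀ _ hn'.ne', Real.rpow_natCast]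
  set P : ℝ := 2 ^ J with hP
  have hP0 : 0 < P := by positivity
  set s : ℝ := (S.card : ℝ) with hs
  have hJ' : P * (64 + 8 * k * CL) ≤ s := by
    rw [one_div, inv_mul_eq_div, le_div_iff₀ (by positivity)] at hJ
    exact hJ
  have hPs : P ≤ s := by nlinarith [mul_nonneg hP0.le (by positivity : 0 ≤ 8 * k * CL)]
  have hs0 : 0 < s := by linarith
  set κ : σ → Set (Fin n → ℝ) := fun x => connectedComponentIn {x | eval x G ≠ 0} (φ x) with hκ
  set cls : Set (Fin n → ℝ) → Finset σ := fun c => S'.filter (fun x => κ x = c) with hcls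
  set a : ℝ := 256 * s / P with ha
  set Kp := (S'.image κ).filter (fun c => k ≤ (cls c).card ∧ ((cls c).card : ℝ) < a + 1) with hKp
  set S2 := S'.filter (fun x => κ x ∈ Kp) with hS2
  have hLn : ((S'.image κ).card : ℝ) ≤ CL * P := by
    have h1 := card_cells_le φ S' G hG
    have h2 : ((S'.image κ).card : ℝ) ≤ (n * (2 * (G.totalDegree : ℝ) + 2) + 1) ^ n := by exact_mod_cast h1
    refine h2.trans ?_
    rw [hCL, ← hρn, ← mul_pow]
    refine pow_le_pow_left₀ (by positivity) ?_ n
    have h3 : (n : ℝ) * (2 * (G.totalDegree : ℝ) + 2) ≤ n * (2 * (CP * ρ) + 2 * ρ) :=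
      mul_le_mul_of_nonneg_left (by linarith) hn'.le
    calc _ ≤ n * (2 * (CP * ρ) + 2 * ρ) + ρ := by linarith
      _ = _ := by ring
  set Cr : τ → Finset (Set (Fin n → ℝ)) := fun t => Kp.filter (fun c =>
    (∃ x ∈ cls c, E x t) ∧ ∃ x ∈ cls c, ¬ E x t) with hCr
  have hCrn : ∀ t ∈ T, ((Cr t).card : ℝ) ≤ CX * (P / ρ) := by
    intro t ht
    set q := ⌈ρ⌉₊ with hq
    have hq1 : ρ ≤ q := Nat.le_ceil _
    have hq2 : (q : ℝ) ≤ 2 * ρ := by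
      have := Nat.ceil_lt_add_one hρ0.le
      linarith
    have h1 := crossing_le G (f t) q (Cr t) (by
      intro c hc
      simp only [hCr, Finset.mem_filter] at hc
      obtain ⟨_, ⟨x, hx, hxE⟩, y, hy, hyE⟩ := hc
      simp only [hcls, Finset.mem_filter] at hx hy
      refine ⟨φ x, φ y, ?_, ?_, hG x hx.1, hx.2.symm, hE1 x (hS' hx.1) t ht hxE, hE2 y (hS' hy.1) t ht hyE⟩
      · rw [← hx.2]; exact mem_connectedComponentIn (hG x hx.1)
      · rw [← hy.2]; exact mem_connectedComponentIn (hG y hy.1))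
    have h2 : ((Cr t).card : ℝ) * q ≤ (n * (2 * ((G.totalDegree : ℝ) + q * (f t).totalDegree) + 2) + 1) ^ n := by
      exact_mod_cast h1
    have hft : ((f t).totalDegree : ℝ) ≤ 2 * D := by exact_mod_cast hf t ht
    have h3 : (n * (2 * ((G.totalDegree : ℝ) + q * (f t).totalDegree) + 2) + 1) ^ n ≤ CX * P := by
      rw [hCX, ← hρn, ← mul_pow]
      refine pow_le_pow_left₀ (by positivity) ?_ n
      have h4 : (q : ℝ) * (f t).totalDegree ≤ (2 * ρ) * (2 * D) := by gcongr
      have h5 : (n : ℝ) * (2 * ((G.totalDegree : ℝ) + q * (f t).totalDegree) + 2)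
          ≤ n * (2 * (CP * ρ + (2 * ρ) * (2 * D)) + 2 * ρ) :=
        mul_le_mul_of_nonneg_left (by linarith) hn'.le
      calc _ ≤ n * (2 * (CP * ρ + (2 * ρ) * (2 * D)) + 2 * ρ) + ρ := by linarith
        _ = _ := by ring
    rw [← mul_div_assoc, le_div_iff₀ hρ0]
    calc ((Cr t).card : ℝ) * ρ ≤ (Cr t).card * q := by gcongr
      _ ≤ _ := h2.trans h3
  refine ⟨S \ S2, Finset.sdiff_subset, ?_, S2, (Finset.filter_subset _ _).trans hS', ?_, ?_⟩
  · set Hv := S'.filter (fun x => a + 1 ≤ ((cls (κ x)).card : ℝ)) with hHv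
    set Sm := S'.filter (fun x => (cls (κ x)).card < k) with hSm
    have hsub : S \ S2 ⊆ (S \ S') ∪ (Hv ∪ Sm) := by
      intro x hx
      simp only [hS2, hKp, Finset.mem_sdiff, Finset.mem_filter, Finset.mem_union, hHv, hSm,
        Finset.mem_image] at hx ⊢
      by_cases hxS : x ∈ S'
      · right
        by_contra hcon
        push Not at hcon
        exact hx.2 ⟨hxS, ⟨x, hxS, rfl⟩, hcon.2 hxS, hcon.1 hxS⟩
      · left; exact ⟨hx.1, hxS⟩
    have h1 : ((S \ S2).card : ℝ) ≤ (S \ S').card + (Hv.card + Sm.card) := by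
      have h := (Finset.card_le_card hsub).trans ((Finset.card_union_le _ _).trans
        (add_le_add le_rfl (Finset.card_union_le _ _)))
      exact_mod_cast h
    have h2 : (Hv.card : ℝ) ≤ s / 8 := by
      obtain ⟨Q, hQ, hQc⟩ := heavy_count κ S' Hv (Finset.filter_subset _ _) a
        (fun x hx => (Finset.mem_filter.1 hx).2)
      have h3 := hQc.trans (hpairs Q hQ)
      rw [ha, ← mul_div_assoc, div_le_div_iff_of_pos_right hP0] at h3
      have h4 : (Hv.card : ℝ) * 256 ≤ 32 * s := by
        apply le_of_mul_le_mul_right _ hs0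
        nlinarith
      linarith
    have h3 : (Sm.card : ℝ) ≤ k * (CL * P) := by
      have h4 : Sm.card ≤ k * (Sm.image κ).card := by
        apply Finset.card_le_mul_card_image
        intro c hc
        obtain ⟨x, hx, rfl⟩ := Finset.mem_image.1 hc
        have hx' := (Finset.mem_filter.1 hx).2
        refine le_trans (Finset.card_le_card ?_) hx'.le
        intro y hy
        simp only [hSm, hcls, Finset.mem_filter] at hy ⊢
        exact ⟨hy.1.1, hy.2⟩
      have h5 : (Sm.image κ).card ≤ (S'.image κ).card :=
        Finset.card_le_card (Finset.image_subset_image (Finset.filter_subset _ _))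
      calc (Sm.card : ℝ) ≤ k * ((Sm.image κ).card : ℝ) := by exact_mod_cast h4
        _ ≤ k * ((S'.image κ).card : ℝ) := by gcongr
        _ ≤ _ := by gcongr
    have h4 : (2 * (S \ S2).card : ℝ) ≤ s := by
      have : P * (64 + 8 * k * CL) = 64 * P + 8 * (k * (CL * P)) := by ring
      have : 0 ≤ k * (CL * P) := by positivity
      linarith
    rw [hs] at h4
    exact_mod_cast h4
  · intro x hx
    by_cases h : x ∈ S2
    · exact Or.inr h
    · exact Or.inl (Finset.mem_sdiff.2 ⟨hx, h⟩)
  · have h1 : incE E S2 T = ∑ c ∈ Kp, incE E (cls c) T := by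
      unfold incE
      rw [Finset.sum_comm]
      refine Finset.sum_congr rfl fun t _ => ?_
      rw [Finset.card_eq_sum_card_fiberwise (f := κ) (t := Kp)]
      · refine Finset.sum_congr rfl fun c hc => congrArg _ ?_
        ext x
        simp only [hS2, hcls, Finset.mem_filter]
        constructor
        · rintro ⟨⟨⟨h1, h2⟩, h3⟩, h4⟩; exact ⟨⟨h1, h4⟩, h3⟩
        · rintro ⟨⟨h1, h4⟩, h3⟩; exact ⟨⟨⟨h1, h4 ▸ hc⟩, h3⟩, h4⟩
      · intro x hx
        simp only [hS2, Finset.coe_filter, Set.mem_ofPred_eq, Finset.mem_filter] at hx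
        exact hx.1.2
    set Xc : Set (Fin n → ℝ) → Finset τ := fun c => T.filter (fun t =>
      (∃ x ∈ cls c, E x t) ∧ ∃ x ∈ cls c, ¬ E x t) with hXc
    have h2 : ∀ c ∈ Kp, incE E (cls c) T ≤ k * (Xc c).card + b * (cls c).card ^ k + b * (cls c).card := by
      intro c hc
      simp only [hKp, Finset.mem_filter] at hc
      apply cell_inc E S T k b hk hfree (cls c) ((Finset.filter_subset _ _).trans hS') hc.2.1 (Xc c)
        (Finset.filter_subset _ _)
      intro t ht htn
      by_contra hcon
      push Not at hcon
      apply htn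
      simp only [hXc, Finset.mem_filter]
      exact ⟨ht, hcon.2, hcon.1⟩
    have h3 : ∑ c ∈ Kp, (Xc c).card = ∑ t ∈ T, (Cr t).card := by
      simp only [hXc, hCr, Finset.card_filter]
      rw [Finset.sum_comm]
    have h4 : ∑ c ∈ Kp, (cls c).card ≤ S.card := by
      calc ∑ c ∈ Kp, (cls c).card ≤ ∑ c ∈ S'.image κ, (cls c).card :=
            Finset.sum_le_sum_of_subset (Finset.filter_subset _ _)
        _ = S'.card := by
            rw [Finset.card_eq_sum_card_image κ S']
        _ ≤ S.card := Finset.card_le_card hS'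
    have h5 : ∑ c ∈ Kp, ((cls c).card : ℝ) ^ k ≤ CL * P * (257 * (s / P)) ^ k := by
      calc ∑ c ∈ Kp, ((cls c).card : ℝ) ^ k ≤ ∑ c ∈ Kp, (257 * (s / P)) ^ k := by
            refine Finset.sum_le_sum fun c hc => ?_
            simp only [hKp, Finset.mem_filter] at hc
            refine pow_le_pow_left₀ (by positivity) ?_ k
            have : 1 ≤ s / P := by rw [le_div_iff₀ hP0]; linarith
            have h6 := hc.2.2
            rw [ha, mul_div_assoc] at h6
            linarith
        _ = Kp.card * (257 * (s / P)) ^ k := by rw [Finset.sum_const, nsmul_eq_mul]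
        _ ≤ _ := by
            have : (Kp.card : ℝ) ≤ (S'.image κ).card := by
              exact_mod_cast Finset.card_le_card (Finset.filter_subset _ _)
            have := this.trans hLn
            gcongr
    have h6 : (incE E S2 T : ℝ) ≤ k * ∑ t ∈ T, ((Cr t).card : ℝ) + b * ∑ c ∈ Kp, ((cls c).card : ℝ) ^ k
        + b * ∑ c ∈ Kp, ((cls c).card : ℝ) := by
      have h7 := Finset.sum_le_sum h2
      rw [← h1, Finset.sum_add_distrib, Finset.sum_add_distrib, ← Finset.mul_sum, ← Finset.mul_sum,
        ← Finset.mul_sum, h3] at h7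
      exact_mod_cast h7
    have h7 : ∑ t ∈ T, ((Cr t).card : ℝ) ≤ T.card * (CX * (P / ρ)) := by
      rw [← nsmul_eq_mul]
      exact Finset.sum_le_card_nsmul _ _ _ hCrn
    have h8 : ∑ c ∈ Kp, ((cls c).card : ℝ) ≤ s := by rw [hs]; exact_mod_cast h4
    set x1 := (T.card : ℝ) * (P / ρ) with hx1
    set x2 := P * (s / P) ^ k with hx2
    have hx10 : 0 ≤ x1 := by positivity
    have hx20 : 0 ≤ x2 := by positivity
    have e2 : CL * P * (257 * (s / P)) ^ k = CL * 257 ^ k * x2 := by rw [mul_pow, hx2]; ring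
    have e1 : (T.card : ℝ) * (CX * (P / ρ)) = CX * x1 := by rw [hx1]; ring
    rw [e2] at h5
    rw [e1] at h7
    have g1 : k * ∑ t ∈ T, ((Cr t).card : ℝ) ≤ k * (CX * x1) := by gcongr
    have g2 : b * ∑ c ∈ Kp, ((cls c).card : ℝ) ^ k ≤ b * (CL * 257 ^ k * x2) := by gcongr
    have g3 : b * ∑ c ∈ Kp, ((cls c).card : ℝ) ≤ b * s := by gcongr
    have p1 : 0 ≤ k * CX := by positivity
    have p2 : 0 ≤ CL * b * 257 ^ k := by positivity
    have p3 : (0 : ℝ) ≤ b := by positivity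
    calc (incE E S2 T : ℝ) ≤ (k * CX) * x1 + (CL * b * 257 ^ k) * x2 + b * s := by
          have : b * (CL * 257 ^ k * x2) = (CL * b * 257 ^ k) * x2 := by ring
          have : k * (CX * x1) = (k * CX) * x1 := by ring
          linarith
      _ ≤ (k * CX + CL * b * 257 ^ k + b + 1) * x1 + (k * CX + CL * b * 257 ^ k + b + 1) * x2
          + (k * CX + CL * b * 257 ^ k + b + 1) * s := by
          refine add_le_add (add_le_add ?_ ?_) ?_
          · exact mul_le_mul_of_nonneg_right (by linarith) hx10
          · exact mul_le_mul_of_nonneg_right (by linarith) hx20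
          · exact mul_le_mul_of_nonneg_right (by linarith) hs0.le
      _ = _ := by ring

lemma numJ (n k : ℕ) (hn : 2 ≤ n) (hk : 2 ≤ k) (c1 : ℝ) (hc : 0 < c1) (hc1 : c1 ≤ 1) (s N : ℝ)
    (hN : 1 ≤ N) (hs : 1 ≤ c1 * s) (hsN : s ≤ N ^ n) (hNs : N ≤ s ^ k) :
    ∃ J : ℕ, (2:ℝ)^J ≤ c1 * s ∧
      N * (2^J/(2:ℝ)^((J:ℝ)/n)) ≤ s ^ ((k:ℝ)*(n-1)/(n*k-1)) * N ^ ((n:ℝ)*(k-1)/(n*k-1)) ∧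
      2^J*(s/2^J)^k ≤ (2/c1)^(k-1) * (s ^ ((k:ℝ)*(n-1)/(n*k-1)) * N ^ ((n:ℝ)*(k-1)/(n*k-1))) := by
  have hs1 : 1 ≤ s := by nlinarith
  have hs0 : 0 < s := by linarith
  have hN0 : 0 < N := by linarith
  have hnR : (2:ℝ) ≤ n := by exact_mod_cast hn
  have hkR : (2:ℝ) ≤ k := by exact_mod_cast hk
  have hq : 0 < (n:ℝ)*k-1 := by nlinarith
  obtain ⟨a, rfl⟩ : ∃ a, s = Real.exp a := ⟨Real.log s, (Real.exp_log hs0).symm⟩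
  obtain ⟨c, rfl⟩ : ∃ c, N = Real.exp c := ⟨Real.log N, (Real.exp_log hN0).symm⟩
  have hc' : 0 ≤ c := by simpa using hN
  rw [← Real.exp_nat_mul, Real.exp_le_exp] at hsN hNs
  obtain ⟨ρ, hρ⟩ : ∃ ρ : ℝ, ρ = (k*a-c)/(n*k-1) := ⟨_, rfl⟩
  have hρq : ρ * ((n:ℝ)*k-1) = k*a-c := by rw [hρ]; exact div_mul_cancel₀ _ hq.ne'
  have hF : Real.exp a ^ ((k:ℝ)*(n-1)/(n*k-1)) * Real.exp c ^ ((n:ℝ)*(k-1)/(n*k-1))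
      = Real.exp (c + (n-1)*ρ) := by
    rw [← Real.exp_mul, ← Real.exp_mul, ← Real.exp_add, hρ]
    congr 1
    obtain ⟨q, hqq⟩ : ∃ q : ℝ, q = (n:ℝ)*k-1 := ⟨_, rfl⟩
    rw [← hqq] at hq ⊢
    field_simp
    linear_combination (-c) * hqq
  rw [hF]
  have hρ0 : 0 ≤ ρ := by rw [hρ]; apply div_nonneg _ hq.le; linarith
  have hρs : n * ρ ≤ a := by
    have : (n*ρ) * ((n:ℝ)*k-1) ≤ a * ((n:ℝ)*k-1) := by
      rw [mul_assoc, hρq]; nlinarith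
    exact le_of_mul_le_mul_right this hq
  set y := max 1 (c1 * Real.exp (n*ρ)) with hy
  have hy1 : 1 ≤ y := le_max_left _ _
  have hys : y ≤ c1 * Real.exp a := max_le hs (by gcongr)
  have hyr : y ≤ Real.exp (n*ρ) := by
    apply max_le
    · simp; positivity
    · nlinarith [Real.exp_pos (n*ρ)]
  have hyc : c1 * Real.exp (n*ρ) ≤ y := le_max_right _ _
  obtain ⟨J, hJ1, hJ2⟩ := exists_nat_pow_near hy1 (one_lt_two)
  refine ⟨J, hJ1.trans hys, ?_, ?_⟩
  · have h1 : (2:ℝ)^J/(2:ℝ)^((J:ℝ)/n) = ((2:ℝ)^J)^((1:ℝ)-1/n) := by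
      rw [← Real.rpow_natCast, ← Real.rpow_sub two_pos, ← Real.rpow_mul two_pos.le]
      congr 1; ring
    have hn1 : (0:ℝ) ≤ 1 - 1/n := by
      rw [sub_nonneg, div_le_one (by linarith)]; linarith
    have h2 : ((2:ℝ)^J)^((1:ℝ)-1/n) ≤ Real.exp ((n-1)*ρ) := by
      calc _ ≤ (Real.exp (n*ρ))^((1:ℝ)-1/n) :=
            Real.rpow_le_rpow (by positivity) (hJ1.trans hyr) hn1
        _ = _ := by
            rw [← Real.exp_mul]; congr 1; field_simp
    rw [h1, Real.exp_add]
    gcongr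
  · have h3 : (0:ℝ) < 2^J := by positivity
    obtain ⟨k', rfl⟩ : ∃ k', k = k'+1 := ⟨k-1, by omega⟩
    simp only [Nat.add_sub_cancel]
    have h4 : (2:ℝ)^J*(Real.exp a/2^J)^(k'+1) = Real.exp a ^ (k'+1) / (2^J)^k' := by
      generalize (2:ℝ)^J = z at h3
      rw [div_pow, pow_succ z]; field_simp
    rw [h4, div_le_iff₀ (by positivity)]
    have h5 : Real.exp (n*ρ) ≤ (2/c1) * 2^J := by
      rw [pow_succ] at hJ2
      rw [div_mul_eq_mul_div, le_div_iff₀ hc]; nlinarith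
    have h6 := pow_le_pow_left₀ (Real.exp_pos _).le h5 k'
    rw [mul_pow, ← Real.exp_nat_mul] at h6
    calc Real.exp a ^ (k'+1) = Real.exp (c + (n-1)*ρ) * Real.exp (k' * (n*ρ)) := by
          rw [← Real.exp_nat_mul, ← Real.exp_add]; congr 1
          push_cast at hρq ⊢
          linarith
      _ ≤ Real.exp (c + (n-1)*ρ) * ((2/c1)^k' * (2^J)^k') := by gcongr
      _ = _ := by ring

lemma KBFree.mono' {σ τ : Type*} {E : σ → τ → Prop} {S A : Finset σ} {T : Finset τ} {k b : ℕ}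
    (h : KBFree E S T k b) (hA : A ⊆ S) : KBFree E A T k b := by
  rintro ⟨P, B, h1, h2⟩
  exact h ⟨P, B, h1.trans hA, h2⟩

lemma incE_union {σ τ : Type*} (E : σ → τ → Prop) (S S1 S2 : Finset σ) (T : Finset τ)
    (h : ∀ x ∈ S, x ∈ S1 ∨ x ∈ S2) : incE E S T ≤ incE E S1 T + incE E S2 T := by
  classical
  unfold incE
  rw [← Finset.sum_add_distrib]
  apply Finset.sum_le_sum
  intro t _
  refine le_trans (Finset.card_le_card ?_) (Finset.card_union_le _ _)
  intro x hx
  simp only [Finset.mem_filter, Finset.mem_union] at hx ⊢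
  rcases h x hx.1 with h | h
  · exact Or.inl ⟨h, hx.2⟩
  · exact Or.inr ⟨h, hx.2⟩

set_option maxHeartbeats 1000000 in
lemma main_ind (n k D b : ℕ) (hn : 2 ≤ n) (hk : 2 ≤ k) : ∃ C : ℝ, 0 < C ∧
    ∀ {σ τ : Type} (V : ℕ → Submodule ℝ (MvPolynomial (Fin n) ℝ))
    (_hV : ∀ m, 0 < m → Module.Finite ℝ (V m) ∧ Module.finrank ℝ (V m) = m ∧
      ∃ N : ℕ, N ^ n < m ∧ ∀ g ∈ V m, g.totalDegree ≤ n * N) (M0 : ℕ)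
    (φ : σ → Fin n → ℝ) (S : Finset σ) (_hgen : Gen V M0 φ S) (_hM0 : S.card + 1 ≤ M0)
    (T : Finset τ) (E : σ → τ → Prop) (f : τ → MvPolynomial (Fin n) ℝ)
    (_hf : ∀ t ∈ T, (f t).totalDegree ≤ 2 * D)
    (_hE1 : ∀ s ∈ S, ∀ t ∈ T, E s t → eval (φ s) (f t) < 1)
    (_hE2 : ∀ s ∈ S, ∀ t ∈ T, ¬ E s t → 2 < eval (φ s) (f t))
    (_hfree : KBFree E S T k b) (_hT : 1 ≤ T.card) (A : Finset σ) (_hA : A ⊆ S)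
    (_hAT : A.card ≤ T.card ^ n), (incE E A T : ℝ) ≤
      C * ((A.card : ℝ) ^ ((k:ℝ)*(n-1)/(n*k-1)) * (T.card : ℝ) ^ ((n:ℝ)*(k-1)/(n*k-1))
        + A.card + T.card) := by
  obtain ⟨c1, K, hc1, hc1', hK, hstep⟩ := step n k D b (by omega) (by omega)
  have hnR : (2:ℝ) ≤ n := by exact_mod_cast hn
  have hkR : (2:ℝ) ≤ k := by exact_mod_cast hk
  have hq : 0 < (n:ℝ)*k-1 := by nlinarith
  obtain ⟨α, hα⟩ : ∃ α : ℝ, α = (k:ℝ)*(n-1)/(n*k-1) := ⟨_, rfl⟩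
  obtain ⟨β, hβ⟩ : ∃ β : ℝ, β = (n:ℝ)*(k-1)/(n*k-1) := ⟨_, rfl⟩
  have hα0 : 0 < α := by rw [hα]; apply div_pos _ hq; nlinarith
  have hα1 : α ≤ 1 := by rw [hα, div_le_one hq]; nlinarith
  obtain ⟨θ, hθ⟩ : ∃ θ : ℝ, θ = (1/2:ℝ)^α := ⟨_, rfl⟩
  have hθ1 : θ < 1 := by rw [hθ]; exact Real.rpow_lt_one (by norm_num) (by norm_num) hα0
  have hθ2 : 1/2 ≤ θ := by
    rw [hθ]
    simpa using Real.rpow_le_rpow_of_exponent_ge (x := (1/2:ℝ)) (by norm_num) (by norm_num) hα1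
  set K' := K * (1 + (2/c1)^(k-1)) with hK'
  have hKK : K ≤ K' := by
    have : 0 ≤ K * (2/c1)^(k-1) := by positivity
    rw [hK']; linarith
  set C2 := K' / (1-θ) with hC2
  have hC2e : C2 * θ + K' = C2 := by
    rw [hC2]; have : 1 - θ ≠ 0 := by linarith
    field_simp; ring
  have hC2p : 0 < C2 := div_pos (by linarith) (by linarith)
  set C3 : ℝ := k + b + b * (1/c1)^k with hC3
  have hC3p : 0 < C3 := by positivity
  simp only [← hα, ← hβ]
  refine ⟨C2 + C3, by positivity, ?_⟩
  intro σ τ V hV M0 φ S hgen hM0 T E f hf hE1 hE2 hfree hT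
  have hN : (1:ℝ) ≤ T.card := by exact_mod_cast hT
  suffices H : ∀ m : ℕ, ∀ A : Finset σ, A.card = m → A ⊆ S → A.card ≤ T.card ^ n → (incE E A T : ℝ) ≤
      C2 * ((A.card : ℝ) ^ α * (T.card : ℝ) ^ β + A.card) + C3 * T.card by
    intro A hA hAT
    refine (H _ A rfl hA hAT).trans ?_
    have : 0 ≤ (A.card : ℝ) ^ α * (T.card : ℝ) ^ β + A.card := by positivity
    nlinarith
  intro m
  induction m using Nat.strong_induction_on with
  | _ m ih =>
  intro A hAm hA hAT
  have hkst := kst E S T k b (by omega) hfree A hA T subset_rfl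
  have hkst' : (incE E A T : ℝ) ≤ k * T.card + b * (A.card:ℝ) ^ k := by exact_mod_cast hkst
  have hnn : 0 ≤ C2 * ((A.card : ℝ) ^ α * (T.card : ℝ) ^ β + A.card) := by positivity
  have hs0 : (0:ℝ) ≤ A.card := by positivity
  by_cases h1 : (A.card:ℝ)^k ≤ T.card
  · have : (b:ℝ) * (A.card:ℝ)^k ≤ b * T.card := by gcongr
    have : 0 ≤ (b:ℝ) * (1/c1)^k * T.card := by positivity
    rw [hC3]; nlinarith
  by_cases h2 : c1 * A.card < 1
  · have h3 : (A.card:ℝ) ≤ 1/c1 := by rw [le_div_iff₀ hc1]; linarith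
    have : (b:ℝ) * (A.card:ℝ)^k ≤ b * (1/c1)^k := by gcongr
    have : (b:ℝ) * (1/c1)^k * 1 ≤ (b:ℝ) * (1/c1)^k * T.card := by gcongr
    have : 0 ≤ (b:ℝ) * T.card := by positivity
    rw [hC3]; nlinarith
  push Not at h1 h2
  obtain ⟨J, hJ1, hJ2, hJ3⟩ := numJ n k hn hk c1 hc1 hc1' A.card T.card hN h2
    (by exact_mod_cast hAT) h1.le
  rw [← hα, ← hβ] at hJ2 hJ3
  obtain ⟨S1, hS1, hS1c, S2, hS2, hcov, hinc⟩ := hstep V hV M0 φ A (hgen.mono hA)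
    (le_trans (Nat.add_le_add_right (Finset.card_le_card hA) 1) hM0) T E f hf
    (fun s hs => hE1 s (hA hs)) (fun s hs => hE2 s (hA hs)) (hfree.mono' hA) J hJ1
  have hA0 : 0 < A.card := by
    rcases Nat.eq_zero_or_pos A.card with h | h
    · rw [h] at h2; norm_num at h2
    · exact h
  have ihS := ih S1.card (by omega) S1 rfl (hS1.trans hA) (by omega)
  have hu : (incE E A T : ℝ) ≤ incE E S1 T + incE E S2 T := by
    exact_mod_cast incE_union E A S1 S2 T hcov
  have hS1r : (S1.card : ℝ) ≤ (1/2) * A.card := by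
    have : (2:ℝ) * S1.card ≤ A.card := by exact_mod_cast hS1c
    linarith
  have hF1 : (S1.card : ℝ)^α ≤ θ * (A.card:ℝ)^α := by
    rw [hθ, ← Real.mul_rpow (by norm_num) hs0]
    exact Real.rpow_le_rpow (by positivity) hS1r hα0.le
  have hTb : 0 ≤ (T.card : ℝ)^β := by positivity
  set F := (A.card : ℝ) ^ α * (T.card : ℝ) ^ β with hF
  have hF2 : (S1.card : ℝ)^α * (T.card : ℝ)^β ≤ θ * F := by
    rw [hF, ← mul_assoc]; gcongr
  have hF0 : 0 ≤ F := by positivity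
  have e1 : C2 * ((S1.card : ℝ)^α * (T.card : ℝ)^β + S1.card) ≤ C2 * (θ * F + θ * A.card) := by
    gcongr
    exact hS1r.trans (by gcongr)
  have e2 : (incE E S2 T : ℝ) ≤ K' * (F + A.card) := by
    refine hinc.trans ?_
    calc _ ≤ K * (F + (2/c1)^(k-1) * F + A.card) := by gcongr
      _ = K' * F + K * A.card := by rw [hK']; ring
      _ ≤ K' * F + K' * A.card := by gcongr
      _ = _ := by ring
  calc (incE E A T : ℝ) ≤ C2 * (θ * F + θ * A.card) + C3 * T.card + K' * (F + A.card) := by linarith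
    _ = (C2 * θ + K') * (F + A.card) + C3 * T.card := by ring
    _ = _ := by rw [hC2e]

lemma chunk {σ τ : Type*} (E : σ → τ → Prop) (T : Finset τ) (M : ℕ) (hM : 0 < M) (B : ℝ) (hB : 0 ≤ B)
    (S : Finset σ) (h : ∀ A ⊆ S, A.card ≤ M → (incE E A T : ℝ) ≤ B * M) (hS : M ≤ S.card) :
    (incE E S T : ℝ) ≤ 2 * B * S.card := by
  classical
  suffices H : ∀ m : ℕ, ∀ A : Finset σ, A ⊆ S → A.card = m →
      (incE E A T : ℝ) ≤ B * (A.card + M) by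
    have := H _ S subset_rfl rfl
    have h2 : (M:ℝ) ≤ S.card := by exact_mod_cast hS
    nlinarith
  intro m
  induction m using Nat.strong_induction_on with
  | _ m ih =>
  intro A hA hAm
  by_cases hc : A.card ≤ M
  · refine (h A hA hc).trans ?_
    gcongr; simp
  · push Not at hc
    obtain ⟨A1, hA1, hc1⟩ := Finset.exists_subset_card_eq hc.le
    have h1 := h A1 (hA1.trans hA) hc1.le
    have hcs : (A \ A1).card + M = A.card := by
      rw [← hc1]; exact Finset.card_sdiff_add_card_eq_card hA1
    have h2 := ih _ (by omega) (A \ A1) (Finset.sdiff_subset.trans hA) rfl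
    have h3 : (incE E A T : ℝ) ≤ incE E A1 T + incE E (A \ A1) T := by
      exact_mod_cast incE_union E A A1 (A \ A1) T (by
        intro x hx; by_cases hx1 : x ∈ A1 <;> simp [hx, hx1])
    have h4 : ((A \ A1).card : ℝ) + M = A.card := by exact_mod_cast hcs
    rw [← h4]
    nlinarith

lemma main_abs (n k D b : ℕ) (hn : 2 ≤ n) (hk : 2 ≤ k) : ∃ C : ℝ, 0 < C ∧
    ∀ {σ τ : Type} (V : ℕ → Submodule ℝ (MvPolynomial (Fin n) ℝ))
    (_hV : ∀ m, 0 < m → Module.Finite ℝ (V m) ∧ Module.finrank ℝ (V m) = m ∧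
      ∃ N : ℕ, N ^ n < m ∧ ∀ g ∈ V m, g.totalDegree ≤ n * N) (M0 : ℕ)
    (φ : σ → Fin n → ℝ) (S : Finset σ) (_hgen : Gen V M0 φ S) (_hM0 : S.card + 1 ≤ M0)
    (T : Finset τ) (E : σ → τ → Prop) (f : τ → MvPolynomial (Fin n) ℝ)
    (_hf : ∀ t ∈ T, (f t).totalDegree ≤ 2 * D)
    (_hE1 : ∀ s ∈ S, ∀ t ∈ T, E s t → eval (φ s) (f t) < 1)
    (_hE2 : ∀ s ∈ S, ∀ t ∈ T, ¬ E s t → 2 < eval (φ s) (f t))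
    (_hfree : KBFree E S T k b) (_hT : 1 ≤ T.card), (incE E S T : ℝ) ≤
      C * ((S.card : ℝ) ^ ((k:ℝ)*(n-1)/(n*k-1)) * (T.card : ℝ) ^ ((n:ℝ)*(k-1)/(n*k-1))
        + T.card + S.card) := by
  obtain ⟨C, hC, h⟩ := main_ind n k D b hn hk
  have hnR : (2:ℝ) ≤ n := by exact_mod_cast hn
  have hkR : (2:ℝ) ≤ k := by exact_mod_cast hk
  have hq : 0 < (n:ℝ)*k-1 := by nlinarith
  refine ⟨6 * C, by positivity, ?_⟩
  intro σ τ V hV M0 φ S hgen hM0 T E f hf hE1 hE2 hfree hT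
  have h' := h V hV M0 φ S hgen hM0 T E f hf hE1 hE2 hfree hT
  have hN : (1:ℝ) ≤ T.card := by exact_mod_cast hT
  have hnn : 0 ≤ (S.card : ℝ) ^ ((k:ℝ)*(n-1)/(n*k-1)) * (T.card : ℝ) ^ ((n:ℝ)*(k-1)/(n*k-1)) := by
    positivity
  by_cases hc : S.card ≤ T.card ^ n
  · refine (h' S subset_rfl hc).trans ?_
    have : (0:ℝ) ≤ S.card := by positivity
    nlinarith
  · push Not at hc
    have hch := chunk E T (T.card ^ n) (by positivity) (3*C) (by positivity) S ?_ hc.le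
    · refine hch.trans ?_
      have : (0:ℝ) ≤ S.card := by positivity
      nlinarith
    · intro A hA hAc
      refine (h' A hA hAc).trans ?_
      have hAr : (A.card : ℝ) ≤ (T.card:ℝ)^n := by exact_mod_cast hAc
      have hT1 : (T.card:ℝ) ≤ (T.card:ℝ)^n := le_self_pow₀ hN (by omega)
      have hα0 : 0 ≤ (k:ℝ)*(n-1)/(n*k-1) := by apply div_nonneg _ hq.le; nlinarith
      have h3 : (A.card : ℝ) ^ ((k:ℝ)*(n-1)/(n*k-1)) * (T.card : ℝ) ^ ((n:ℝ)*(k-1)/(n*k-1))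
          ≤ (T.card:ℝ)^n := by
        calc _ ≤ ((T.card:ℝ)^n) ^ ((k:ℝ)*(n-1)/(n*k-1)) * (T.card : ℝ) ^ ((n:ℝ)*(k-1)/(n*k-1)) := by
              gcongr
          _ = _ := by
              rw [← Real.rpow_natCast, ← Real.rpow_mul (by linarith), ← Real.rpow_add (by linarith)]
              congr 1
              obtain ⟨q, hqq⟩ : ∃ q : ℝ, q = (n:ℝ)*k-1 := ⟨_, rfl⟩
              rw [← hqq] at hq ⊢
              field_simp
              linear_combination (-1) * hqq
      push_cast
      calc _ ≤ C * ((T.card:ℝ)^n + (T.card:ℝ)^n + (T.card:ℝ)^n) := by gcongr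
        _ = _ := by ring

lemma inc_eq (n : ℕ) (S : Finset (Fin n → ℝ)) (T : Finset (Set (Fin n → ℝ))) :
    incCountAbs S T = incE (fun s t => s ∈ t) S T := by
  classical
  unfold incCountAbs incE
  apply Finset.sum_congr rfl
  intro t _
  rw [← Set.ncard_coe_finset]
  congr 1
  ext x; simp

lemma main_geom (n k D b : ℕ) (hn : 2 ≤ n) (hk : 2 ≤ k) : ∃ C : ℝ, 0 < C ∧
    ∀ T : Finset (Set (Fin n → ℝ)), (∀ t ∈ T, IsRealHypersurfaceDegLE n t D) →
    ∀ S : Finset (Fin n → ℝ), KBFree (fun s t => s ∈ t) S T k b → (incCountAbs S T : ℝ) ≤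
      C * ((S.card : ℝ) ^ ((k:ℝ)*(n-1)/(n*k-1)) * (T.card : ℝ) ^ ((n:ℝ)*(k-1)/(n*k-1))
        + T.card + S.card) := by
  classical
  obtain ⟨C, hC, h⟩ := main_abs n k D b hn hk
  refine ⟨C, hC, ?_⟩
  intro T hT S hfree
  rcases T.eq_empty_or_nonempty with rfl | hTne
  · simp only [incCountAbs, Finset.sum_empty]; push_cast; positivity
  rw [inc_eq]
  choose! p hp0 hpz hpd using hT
  have hmem : ∀ t ∈ T, ∀ x, x ∈ t ↔ eval x (p t) = 0 := by
    intro t ht x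
    conv_lhs => rw [hpz t ht]
    rfl
  obtain ⟨δ, hδ, hδ'⟩ : ∃ δ : ℝ, 0 < δ ∧ ∀ s ∈ S, ∀ t ∈ T, s ∉ t → δ ≤ (eval s (p t))^2 := by
    set Q := ((S ×ˢ T).filter fun q => q.1 ∉ q.2).image fun q => (eval q.1 (p q.2))^2 with hQ
    have hQp : ∀ y ∈ insert (1:ℝ) Q, 0 < y := by
      intro y hy
      rcases Finset.mem_insert.1 hy with rfl | hy
      · exact one_pos
      · obtain ⟨q, hq, rfl⟩ := Finset.mem_image.1 hy
        simp only [Finset.mem_filter, Finset.mem_product] at hq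
        have : eval q.1 (p q.2) ≠ 0 := fun h => hq.2 ((hmem _ hq.1.2 _).2 h)
        positivity
    have hne : (insert (1:ℝ) Q).Nonempty := ⟨1, Finset.mem_insert_self _ _⟩
    refine ⟨(insert (1:ℝ) Q).min' hne, hQp _ (Finset.min'_mem _ _), ?_⟩
    intro s hs t ht hst
    apply Finset.min'_le
    apply Finset.mem_insert_of_mem
    exact Finset.mem_image.2 ⟨(s,t), by simp [hs, ht, hst], rfl⟩
  set f : Set (Fin n → ℝ) → MvPolynomial (Fin n) ℝ := fun t => MvPolynomial.C (3/δ) * (p t)^2 with hf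
  have hfe : ∀ t x, eval x (f t) = 3/δ * (eval x (p t))^2 := by intro t x; simp [hf]
  have hfc : ∀ t, Continuous fun x => eval x (f t) := fun t => MvPolynomial.continuous_eval _
  set U : (Fin n → ℝ) → Set (Fin n → ℝ) := fun s =>
    if s ∈ S then ⋂ t ∈ T, (if s ∈ t then {x | eval x (f t) < 1} else {x | 2 < eval x (f t)})
    else Set.univ with hU
  obtain ⟨V, hV⟩ := exists_poly_spaces n (by omega)
  obtain ⟨φ, hφ, hgen⟩ := exists_gen V (fun m hm => ⟨(hV m hm).1, (hV m hm).2.1⟩) (S.card+1) U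
    (by
      intro s
      simp only [hU]
      split_ifs
      · apply T.finite_toSet.isOpen_biInter
        intro t _
        split_ifs
        · exact isOpen_lt (hfc t) continuous_const
        · exact isOpen_lt continuous_const (hfc t)
      · exact isOpen_univ)
    (by
      intro s
      refine ⟨s, ?_⟩
      simp only [hU]
      split_ifs with hs
      · refine Set.mem_iInter₂.2 fun t ht => ?_
        split_ifs with hst
        · simp only [Set.mem_ofPred_eq, hfe, (hmem t ht s).1 hst]; norm_num
        · have := hδ' s hs t ht hst
          simp only [Set.mem_ofPred_eq, hfe]
          have : 3/δ * δ ≤ 3/δ * (eval s (p t))^2 := by gcongr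
          rw [div_mul_cancel₀ _ hδ.ne'] at this
          linarith
      · trivial) S
  have hφ' : ∀ s ∈ S, ∀ t ∈ T, φ s ∈ (if s ∈ t then {x | eval x (f t) < 1} else {x | 2 < eval x (f t)}) := by
    intro s hs t ht
    have := hφ s
    simp only [hU, if_pos hs] at this
    exact Set.mem_iInter₂.1 this t ht
  refine h V hV (S.card+1) φ S hgen le_rfl T (fun s t => s ∈ t) f ?_ ?_ ?_ hfree
    (Finset.card_pos.2 hTne)
  · intro t ht
    simp only [hf]
    refine (totalDegree_mul _ _).trans ?_
    rw [totalDegree_C, zero_add]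
    exact (totalDegree_pow _ _).trans (Nat.mul_le_mul_left _ (hpd t ht))
  · intro s hs t ht hst
    have := hφ' s hs t ht
    rwa [if_pos hst] at this
  · intro s hs t ht hst
    have := hφ' s hs t ht
    rwa [if_neg hst] at this

lemma case_k1 (n b : ℕ) (T : Finset (Set (Fin n → ℝ))) (S : Finset (Fin n → ℝ))
    (hfree : KBFree (fun s t => s ∈ t) S T 1 b) : (incCountAbs S T : ℝ) ≤ b * S.card := by
  classical
  rw [inc_eq]
  have : incE (fun (s : Fin n → ℝ) (t : Set (Fin n → ℝ)) => s ∈ t) S T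
      = ∑ s ∈ S, (T.filter fun t => s ∈ t).card := by
    unfold incE
    exact (Finset.sum_card_bipartiteAbove_eq_sum_card_bipartiteBelow _).symm
  rw [this]
  have h2 : ∀ s ∈ S, (T.filter fun t => s ∈ t).card ≤ b := by
    intro s hs
    by_contra hc
    push Not at hc
    obtain ⟨B, hB, hBc⟩ := Finset.exists_subset_card_eq hc.le
    refine hfree ⟨{s}, B, by simpa using hs, hB.trans (Finset.filter_subset _ _), by simp, hBc, ?_⟩
    intro s' hs' t ht
    rw [Finset.mem_singleton.1 hs']
    exact (Finset.mem_filter.1 (hB ht)).2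
  have := Finset.sum_le_card_nsmul _ _ _ h2
  rw [smul_eq_mul, mul_comm] at this
  exact_mod_cast this

lemma case_n1 (D : ℕ) (T : Finset (Set (Fin 1 → ℝ))) (hT : ∀ t ∈ T, IsRealHypersurfaceDegLE 1 t D)
    (S : Finset (Fin 1 → ℝ)) : (incCountAbs S T : ℝ) ≤ D * T.card := by
  classical
  have h : ∀ t ∈ T, (↑S ∩ t).ncard ≤ D := by
    intro t ht
    obtain ⟨p, hp, hpz, hpd⟩ := hT t ht
    rcases S.eq_empty_or_nonempty with rfl | hS
    · simp
    set R : Finset ℝ := S.image fun x => x 0 with hR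
    have hR0 : (0 : ℚ≥0) < R.card := by
      have : 0 < R.card := Finset.card_pos.2 (hS.image _)
      exact_mod_cast this
    have h1 := schwartz_zippel_totalDegree hp R
    rw [pow_one, div_le_div_iff_of_pos_right hR0] at h1
    have h2 := Nat.cast_le.1 h1
    refine le_trans ?_ (h2.trans hpd)
    rw [← Set.ncard_coe_finset]
    apply Set.ncard_le_ncard _ (Finset.finite_toSet _)
    rintro x ⟨hxS, hxt⟩
    rw [Finset.mem_coe, Finset.mem_filter, Fintype.mem_piFinset]
    refine ⟨fun i => ?_, ?_⟩
    · rw [Subsingleton.elim i 0]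
      exact Finset.mem_image_of_mem _ hxS
    · rw [hpz] at hxt; exact hxt
  have := Finset.sum_le_card_nsmul _ _ _ h
  rw [smul_eq_mul, mul_comm] at this
  unfold incCountAbs
  exact_mod_cast this

/-- Corollary 7 of the paper: incidences between a set of bounded-degree
hypersurfaces of `ℝⁿ` and a `(k, b)`-free set of points. -/
theorem statement6 (n k D b : ℕ) (hn : 0 < n) (hk : 0 < k) (hD : 0 < D) (hb : 0 < b) :
    ∃ C : ℝ, 0 < C ∧
      ∀ T : Finset (Set (Fin n → ℝ)), (∀ t ∈ T, IsRealHypersurfaceDegLE n t D) →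
        ∀ S : Finset (Fin n → ℝ), KBFree (fun s t => s ∈ t) S T k b →
          (incCountAbs S T : ℝ) ≤
            C * ((S.card : ℝ) ^ alpha k n * (T.card : ℝ) ^ beta k n
              + (T.card : ℝ) + (S.card : ℝ)) := by
  by_cases hk1 : k = 1
  · subst hk1
    refine ⟨b, by exact_mod_cast hb, ?_⟩
    intro T hT S hfree
    refine (case_k1 n b T S hfree).trans ?_
    have : 0 ≤ (S.card : ℝ) ^ alpha 1 n * (T.card : ℝ) ^ beta 1 n := by positivity
    gcongr
    have : (0:ℝ) ≤ T.card := by positivity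
    linarith
  by_cases hn1 : n = 1
  · subst hn1
    refine ⟨D, by exact_mod_cast hD, ?_⟩
    intro T hT S hfree
    refine (case_n1 D T hT S).trans ?_
    have : 0 ≤ (S.card : ℝ) ^ alpha k 1 * (T.card : ℝ) ^ beta k 1 := by positivity
    gcongr
    have : (0:ℝ) ≤ S.card := by positivity
    linarith
  have ha : alpha k n = (k:ℝ)*(n-1)/(n*k-1) := by unfold alpha; rw [if_neg (fun h => hk1 h.1)]
  have hb' : beta k n = (n:ℝ)*(k-1)/(n*k-1) := by unfold beta; rw [if_neg (fun h => hk1 h.1)]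
  rw [ha, hb']
  exact main_geom n k D b (by omega) (by omega)

end Paper
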